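/- Inductive step for the greatest fixed point case of the main theorem: Let ⟨P, {→a}_{a∈L}⟩ be a PLTS, and let G₁ be a pLμ formula and X a variable such that νX.G₁ is in normal form. Assume the inductive hypothesis: for every interpretation ρ' : Var → (P → [0,1]) and every q ∈ P, ⟦G₁⟧ρ'(q) = Val↓(𝒢^{G₁}_{ρ'})(⟨q,G₁⟩) = Val↑(𝒢^{G₁}_{ρ'})(⟨q,G₁⟩). Then for every interpretation ρ and every p ∈ P, ⟦νX.G₁⟧ρ(p) = Val↓(𝒢^{νX.G₁}_ρ)(⟨p,νX.G₁⟩) = Val↑(𝒢^{νX.G₁}_ρ)(⟨p,νX.G₁⟩). -/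

import Mathlib

noncomputable section

open scoped unitInterval Classical

instance : Fact ((0:ℝ) ≤ 1) := ⟨zero_le_one⟩

/-- A discrete probability distribution on `X`: a `[0,1]`-valued (indeed nonnegative)
function summing to `1` (hence with countable support). -/
structure PDist (X : Type) where
  f : X → ℝ
  nonneg : ∀ x, 0 ≤ f x
  sum_one : HasSum f 1

/-- A probabilistic labeled transition system over labels `L` with states `P`:
for each label `a` and state `p`, the set of distributions `d` with `p →a d`. -/
structure PLTS (L P : Type) where
  trans : L → P → Set (PDist P)

/-- Formulas of the probabilistic modal μ-calculus, with variables drawn from `ℕ`. -/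
inductive pLmu (L : Type) : Type
  | var : ℕ → pLmu L
  | dia : L → pLmu L → pLmu L
  | box : L → pLmu L → pLmu L
  | or  : pLmu L → pLmu L → pLmu L
  | and : pLmu L → pLmu L → pLmu L
  | mu  : ℕ → pLmu L → pLmu L
  | nu  : ℕ → pLmu L → pLmu L

namespace pLmu

variable {L P : Type}

/-- free variables -/
def freeVars : pLmu L → Set ℕ
  | .var X => {X}
  | .dia _ G => freeVars G
  | .box _ G => freeVars G
  | .or G H => freeVars G ∪ freeVars H
  | .and G H => freeVars G ∪ freeVars H
  | .mu X G => freeVars G \ {X}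
  | .nu X G => freeVars G \ {X}

/-- the list of variables bound by the μ- and ν-binders occurring in a formula -/
def binders : pLmu L → List ℕ
  | .var _ => []
  | .dia _ G => binders G
  | .box _ G => binders G
  | .or G H => binders G ++ binders H
  | .and G H => binders G ++ binders H
  | .mu X G => X :: binders G
  | .nu X G => X :: binders G

/-- A formula is in normal form if every binder binds a distinct variable and no
variable occurs both free and bound. -/
def NormalForm (F : pLmu L) : Prop :=
  F.binders.Nodup ∧ ∀ X ∈ F.binders, X ∉ F.freeVars

/-- A formula is closed if it has no free variables. -/
def Closed (F : pLmu L) : Prop := F.freeVars = ∅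

/-- The expected value of `g : P → [0,1]` under a distribution `d` on `P`
(the real number `∑ q, d(q) · g(q)`, which lies in `[0,1]`, viewed in `[0,1]`). -/
def distExp (d : PDist P) (g : P → unitInterval) : unitInterval :=
  Set.projIcc 0 1 zero_le_one (∑' q, d.f q * (g q : ℝ))

/-- The denotational semantics `⟦F⟧ρ : P → [0,1]` of a pLμ formula, where least
(resp. greatest) fixed points are given, à la Knaster–Tarski, as the infimum of
prefixed points (resp. supremum of postfixed points) in the complete lattice `P → [0,1]`. -/
def sem (M : PLTS L P) : pLmu L → (ℕ → P → unitInterval) → P → unitInterval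
  | .var X, ρ, p => ρ X p
  | .dia a G, ρ, p => sSup ((fun d => distExp d (sem M G ρ)) '' M.trans a p)
  | .box a G, ρ, p => sInf ((fun d => distExp d (sem M G ρ)) '' M.trans a p)
  | .or G H, ρ, p => sem M G ρ p ⊔ sem M H ρ p
  | .and G H, ρ, p => sem M G ρ p ⊓ sem M H ρ p
  | .mu X G, ρ, p => sInf {g : P → unitInterval | sem M G (Function.update ρ X g) ≤ g} p
  | .nu X G, ρ, p => sSup {g : P → unitInterval | g ≤ sem M G (Function.update ρ X g)} p

end pLmu

noncomputable section

open scoped unitInterval Classical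

/-- The three agents of a 2½-player game. -/
inductive Player : Type
  | one : Player
  | two : Player
  | nature : Player
deriving DecidableEq

/-- A 2½-player arena: a directed graph `(S, E)`, an assignment of states to the
players (Player 1, Player 2, Nature), and probabilistic transition data at Nature
states. -/
structure Arena (S : Type) where
  E : S → Set S
  owner : S → Player
  prob : S → S → ℝ

namespace Arena

variable {S : Type}

/-- Well-formedness: at every Nature state `s`, `prob s` is a probability
distribution whose support is exactly the set `E s` of successors of `s`. -/
def Wellformed (A : Arena S) : Prop :=
  ∀ s, A.owner s = Player.nature →
    (∀ t, 0 ≤ A.prob s t) ∧ HasSum (A.prob s) 1 ∧ A.E s = Function.support (A.prob s)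

/-- `s` is a terminal state if it has no successors. -/
def Terminal (A : Arena S) (s : S) : Prop := A.E s = ∅

end Arena

/-- An (unbounded memory deterministic) strategy for player `pl` in arena `A`:
given the history `hist` and the current state `s` (a non-terminal state owned by
`pl`), it picks a successor of `s`. -/
structure Strategy {S : Type} (A : Arena S) (pl : Player) where
  next : List S → S → S
  valid : ∀ (hist : List S) (s : S), A.owner s = pl → A.E s ≠ ∅ → next hist s ∈ A.E s

variable {S : Type}

/-- The Markov chain determined by a strategy profile `(σ1, σ2)` and initial state
`s0`: the tree of finite paths from `s0` in which nodes ending in a Player 1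
(resp. Player 2) state are extended uniquely according to `σ1` (resp. `σ2`), nodes
ending in a Nature state branch fully over the successors, and (for the purpose of
encoding finite completed paths as infinite sequences) nodes ending in a terminal
state are extended by repeating the terminal state. -/
inductive MC (A : Arena S) (σ1 : Strategy A Player.one) (σ2 : Strategy A Player.two)
    (s0 : S) : List S → Prop
  | root : MC A σ1 σ2 s0 [s0]
  | one (l : List S) (s : S) : MC A σ1 σ2 s0 (l ++ [s]) → A.owner s = Player.one →
      A.E s ≠ ∅ → MC A σ1 σ2 s0 (l ++ [s, σ1.next l s])
  | two (l : List S) (s : S) : MC A σ1 σ2 s0 (l ++ [s]) → A.owner s = Player.two →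
      A.E s ≠ ∅ → MC A σ1 σ2 s0 (l ++ [s, σ2.next l s])
  | nature (l : List S) (s t : S) : MC A σ1 σ2 s0 (l ++ [s]) →
      A.owner s = Player.nature → t ∈ A.E s → MC A σ1 σ2 s0 (l ++ [s, t])
  | term (l : List S) (s : S) : MC A σ1 σ2 s0 (l ++ [s]) → A.E s = ∅ →
      MC A σ1 σ2 s0 (l ++ [s, s])

/-- The space of completed paths, encoded as infinite sequences of states
(a finite completed path, i.e. one ending in a terminal state, is encoded by
repeating its terminal state forever). -/
def PathSpace (S : Type) : Type := ℕ → S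

instance : MeasurableSpace (PathSpace S) :=
  @MeasurableSpace.pi ℕ (fun _ => S) (fun _ => ⊤)

/-- The basic cylinder set of completed paths extending a finite path. -/
def cyl (l : List S) : Set (PathSpace S) :=
  {u | ∀ i : Fin l.length, u i = l.get i}

/-- the probability of a single step -/
def stepProb (A : Arena S) (s t : S) : ℝ :=
  if A.owner s = Player.nature then A.prob s t else 1

/-- The product of the probabilities of the Nature steps along a finite path. -/
def pathProb (A : Arena S) : List S → ℝ
  | [] => 1
  | [_] => 1
  | s :: t :: l => stepProb A s t * pathProb A (t :: l)

/-- The weight assigned to a basic cylinder: the product of the probabilities of its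
Nature steps if the underlying finite path belongs to the Markov chain, `0` otherwise. -/
def cylWeight (A : Arena S) (σ1 : Strategy A Player.one) (σ2 : Strategy A Player.two)
    (s0 : S) (l : List S) : ℝ :=
  if MC A σ1 σ2 s0 l then pathProb A l else 0

/-- The Borel probability measure on completed paths induced by the Markov chain
`M^{s0}_{σ1,σ2}`: the unique probability measure assigning to every basic cylinder
its weight. -/
def pathMeasure (A : Arena S) (σ1 : Strategy A Player.one) (σ2 : Strategy A Player.two)
    (s0 : S) : MeasureTheory.Measure (PathSpace S) :=
  if h : ∃ μ : MeasureTheory.Measure (PathSpace S), MeasureTheory.IsProbabilityMeasure μ ∧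
      ∀ l : List S, l ≠ [] → μ (cyl l) = ENNReal.ofReal (cylWeight A σ1 σ2 s0 l)
  then h.choose else 0

/-- The payoff function induced by a parity structure `(pri, R)`: a completed path
reaching a terminal state gets the reward `R` of (the first occurrence of) that
terminal state; an infinite path gets `1` if the greatest priority occurring
infinitely often along it is even, and `0` otherwise. -/
def payoff (A : Arena S) (pri : S → ℕ) (R : S → ℝ) (u : PathSpace S) : ℝ :=
  if h : ∃ i, A.E (u i) = ∅ then R (u (Nat.find h))
  else if Even (sSup {n | {i | pri (u i) = n}.Infinite}) then 1 else 0

/-- The expected reward of Player 1 for the Markov chain `M^{s0}_{σ1,σ2}`: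
the integral of the payoff against the induced probability measure on paths. -/
def expReward (A : Arena S) (pri : S → ℕ) (R : S → ℝ) (σ1 : Strategy A Player.one)
    (σ2 : Strategy A Player.two) (s0 : S) : ℝ :=
  ∫ u, payoff A pri R u ∂(pathMeasure A σ1 σ2 s0)

/-- The lower value `Val↓` of the 2½-player parity game `⟨A, Φ_(pri,R)⟩`. -/
def lowerValue (A : Arena S) (pri : S → ℕ) (R : S → ℝ) (s : S) : ℝ :=
  ⨆ σ1 : Strategy A Player.one, ⨅ σ2 : Strategy A Player.two, expReward A pri R σ1 σ2 s

/-- The upper value `Val↑` of the 2½-player parity game `⟨A, Φ_(pri,R)⟩`. -/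
def upperValue (A : Arena S) (pri : S → ℕ) (R : S → ℝ) (s : S) : ℝ :=
  ⨅ σ2 : Strategy A Player.two, ⨆ σ1 : Strategy A Player.one, expReward A pri R σ1 σ2 s

/-- The Bellman functional `𝓕` on `S → ℝ` associated to the game `⟨A, Φ_(pri,R)⟩`. -/
def bellman (A : Arena S) (R : S → ℝ) (f : S → ℝ) : S → ℝ := fun s =>
  if A.E s = ∅ then R s
  else match A.owner s with
    | Player.one => sSup (f '' A.E s)
    | Player.two => sInf (f '' A.E s)
    | Player.nature => ∑' t : A.E s, A.prob s t * f t
namespace pLmu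

variable {L P : Type}

/-- the number of connectives of a formula -/
def size : pLmu L → ℕ
  | .var _ => 1
  | .dia _ G => size G + 1
  | .box _ G => size G + 1
  | .or G H => size G + size H + 1
  | .and G H => size G + size H + 1
  | .mu _ G => size G + 1
  | .nu _ G => size G + 1

/-- `varInfo F d X` looks up the (leftmost outermost) binder binding `X` in `F`,
returning `some (d', b)` where `d'` is the depth (starting from `d`) at which the
binder occurs and `b` is `true` for a μ-binder and `false` for a ν-binder, and
`none` if `X` is not bound in `F`. -/
def varInfo : pLmu L → ℕ → ℕ → Option (ℕ × Bool)
  | .var _, _, _ => none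
  | .dia _ G, d, X => varInfo G (d+1) X
  | .box _ G, d, X => varInfo G (d+1) X
  | .or G H, d, X => (varInfo G (d+1) X).orElse (fun _ => varInfo H (d+1) X)
  | .and G H, d, X => (varInfo G (d+1) X).orElse (fun _ => varInfo H (d+1) X)
  | .mu Y G, d, X => if Y = X then some (d, true) else varInfo G (d+1) X
  | .nu Y G, d, X => if Y = X then some (d, false) else varInfo G (d+1) X

/-- `bodyOf F X` is the body of the (leftmost outermost) binder binding `X` in `F`,
if any. -/
def bodyOf : pLmu L → ℕ → Option (pLmu L)
  | .var _, _ => none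
  | .dia _ G, X => bodyOf G X
  | .box _ G, X => bodyOf G X
  | .or G H, X => (bodyOf G X).orElse (fun _ => bodyOf H X)
  | .and G H, X => (bodyOf G X).orElse (fun _ => bodyOf H X)
  | .mu Y G, X => if Y = X then some G else bodyOf G X
  | .nu Y G, X => if Y = X then some G else bodyOf G X

end pLmu

/-- The states of the game `𝒢^F_ρ`: pairs of a process state or a distribution on
process states, and a (sub)formula. -/
abbrev GState (L P : Type) : Type := (P ⊕ PDist P) × pLmu L

/-- The arena of the 2½-player parity game `𝒢^F_ρ` associated to a PLTS `M`
and a formula `F`. -/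
def gameArena (M : PLTS L P) (F : pLmu L) : Arena (GState L P) where
  E := fun s =>
    match s with
    | (Sum.inl p, .var X) =>
        match pLmu.bodyOf F X with
        | some H => {((Sum.inl p : P ⊕ PDist P), H)}
        | none => ∅
    | (Sum.inl p, .dia a G) => (fun d => ((Sum.inr d : P ⊕ PDist P), G)) '' M.trans a p
    | (Sum.inl p, .box a G) => (fun d => ((Sum.inr d : P ⊕ PDist P), G)) '' M.trans a p
    | (Sum.inl p, .or G H) => {((Sum.inl p : P ⊕ PDist P), G), ((Sum.inl p : P ⊕ PDist P), H)}
    | (Sum.inl p, .and G H) => {((Sum.inl p : P ⊕ PDist P), G), ((Sum.inl p : P ⊕ PDist P), H)}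
    | (Sum.inl p, .mu _ G) => {((Sum.inl p : P ⊕ PDist P), G)}
    | (Sum.inl p, .nu _ G) => {((Sum.inl p : P ⊕ PDist P), G)}
    | (Sum.inr d, G) => (fun q => ((Sum.inl q : P ⊕ PDist P), G)) '' Function.support d.f
  owner := fun s =>
    match s with
    | (Sum.inl _, .var X) =>
        match pLmu.varInfo F 0 X with
        | some (_, true) => Player.one
        | some (_, false) => Player.two
        | none => Player.one
    | (Sum.inl _, .dia _ _) => Player.one
    | (Sum.inl _, .box _ _) => Player.two
    | (Sum.inl _, .or _ _) => Player.one
    | (Sum.inl _, .and _ _) => Player.two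
    | (Sum.inl _, .mu _ _) => Player.one
    | (Sum.inl _, .nu _ _) => Player.two
    | (Sum.inr _, _) => Player.nature
  prob := fun s t =>
    match s, t with
    | (Sum.inr d, G), (Sum.inl q, G') => if G' = G then d.f q else 0
    | _, _ => 0

/-- The priority assignment of the game `𝒢^F_ρ`: a state `⟨p, X⟩` with `X` bound
in `F` at binder depth `d` gets the positive priority `2(|F| - d) + 1` if `X` is a
μ-variable and `2(|F| - d)` if `X` is a ν-variable (so that μ-variables get odd and
ν-variables get even priorities, and variables subsuming others get greater
priorities); all other states get priority `0`. -/
def gamePri (F : pLmu L) : GState L P → ℕ := fun s =>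
  match s with
  | (Sum.inl _, .var X) =>
      match pLmu.varInfo F 0 X with
      | some (d, true) => 2 * (F.size - d) + 1
      | some (d, false) => 2 * (F.size - d)
      | none => 0
  | _ => 0

/-- The terminal reward assignment of the game `𝒢^F_ρ`: a terminal state `⟨p, X⟩`
(with `X` free in `F`) gets reward `ρ(X)(p)`; a terminal state `⟨p, ⟨a⟩G⟩` gets
reward `0` and a terminal state `⟨p, [a]G⟩` gets reward `1`. -/
def gameR (F : pLmu L) (ρ : ℕ → P → unitInterval) : GState L P → ℝ := fun s =>
  match s with
  | (Sum.inl p, .var X) => (ρ X p : ℝ)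
  | (Sum.inl _, .dia _ _) => 0
  | (Sum.inl _, .box _ _) => 1
  | _ => 0


section MeasureBasics

open MeasureTheory

theorem meas_coord {S : Type} (n : ℕ) (B : Set S) : MeasurableSet {u : PathSpace S | u n ∈ B} := by
  let _ : MeasurableSpace S := ⊤
  have : Measurable (fun u : ℕ → S => u n) := measurable_pi_apply n
  exact this (MeasurableSpace.measurableSet_top (s := B))

theorem meas_into {S Ω : Type} [MeasurableSpace Ω] (f : Ω → PathSpace S)
    (h : ∀ n (B : Set S), MeasurableSet {ω | f ω n ∈ B}) : Measurable f := by
  let _ : MeasurableSpace S := ⊤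
  exact measurable_pi_iff.2 (fun n B _ => h n B)

/-- prepend a state to a path -/
def pcons {S : Type} (x : S) (u : PathSpace S) : PathSpace S := fun n => Nat.casesOn n x u

/-- drop the first state of a path -/
def ptail {S : Type} (u : PathSpace S) : PathSpace S := fun n => u (n+1)

@[simp] theorem pcons_zero {S : Type} (x : S) (u : PathSpace S) : pcons x u 0 = x := rfl
@[simp] theorem pcons_succ {S : Type} (x : S) (u : PathSpace S) (n : ℕ) :
    pcons x u (n+1) = u n := rfl
@[simp] theorem ptail_pcons {S : Type} (x : S) (u : PathSpace S) : ptail (pcons x u) = u := rfl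

theorem meas_pcons {S : Type} (x : S) : Measurable (pcons x) := by
  apply meas_into
  rintro (_ | n) B
  · exact MeasurableSet.const (x ∈ B)
  · exact meas_coord n B

theorem meas_ptail {S : Type} : Measurable (ptail (S := S)) := by
  apply meas_into
  intro n B
  exact meas_coord (n+1) B

theorem cyl_nil {S : Type} : cyl ([] : List S) = Set.univ := by
  ext u; simp [cyl]

theorem mem_cyl_cons {S : Type} (x : S) (l : List S) (u : PathSpace S) :
    u ∈ cyl (x :: l) ↔ u 0 = x ∧ ptail u ∈ cyl l := by
  constructor
  · intro h
    exact ⟨h ⟨0, by simp⟩, fun i => h i.succ⟩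
  · rintro ⟨h0, h⟩ ⟨i, hi⟩
    cases i with
    | zero => exact h0
    | succ i => exact h ⟨i, by simpa using hi⟩

theorem mem_cyl_snoc {S : Type} (l : List S) (t : S) (u : PathSpace S) :
    u ∈ cyl (l ++ [t]) ↔ u ∈ cyl l ∧ u l.length = t := by
  induction l generalizing u with
  | nil => simp [mem_cyl_cons, cyl_nil]
  | cons x l ih =>
    simp only [List.cons_append, mem_cyl_cons, ih, List.length_cons, and_assoc]
    rfl

theorem meas_cyl {S : Type} (l : List S) : MeasurableSet (cyl l) := by
  have : cyl l = ⋂ i : Fin l.length, {u : PathSpace S | u i ∈ ({l.get i} : Set S)} := by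
    ext u; simp [cyl]
  rw [this]
  exact MeasurableSet.iInter fun i => meas_coord _ _

/-- prefix of a path -/
def pre {S : Type} : ℕ → PathSpace S → List S
  | 0, _ => []
  | n+1, u => pre n u ++ [u n]

theorem pre_length {S : Type} (n : ℕ) (u : PathSpace S) : (pre n u).length = n := by
  induction n with
  | zero => rfl
  | succ n ih => simp [pre, ih]

theorem mem_cyl_pre {S : Type} (n : ℕ) (u : PathSpace S) : u ∈ cyl (pre n u) := by
  induction n with
  | zero => simp [pre, cyl_nil]
  | succ n ih => simp [pre, mem_cyl_snoc, ih, pre_length]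

theorem mem_cyl_iff {S : Type} (l : List S) (u : PathSpace S) :
    u ∈ cyl l ↔ pre l.length u = l := by
  constructor
  · intro h
    induction l using List.reverseRecOn with
    | nil => rfl
    | append_singleton l t ih =>
      rw [mem_cyl_snoc] at h
      simp [pre, ih h.1, h.2]
  · intro h; rw [← h]; exact mem_cyl_pre _ _

theorem pre_getElem {S : Type} (n : ℕ) (u : PathSpace S) (i : ℕ) (hi : i < n) :
    (pre n u)[i]? = some (u i) := by
  induction n with
  | zero => omega
  | succ n ih =>
    rcases Nat.lt_succ_iff_lt_or_eq.1 hi with h | h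
    · rw [pre, List.getElem?_append_left (by simpa [pre_length] using h), ih h]
    · subst h
      rw [pre, List.getElem?_append_right (by simp [pre_length])]
      simp [pre_length]

/-- the weight of a cylinder -/
def Cw {S : Type} : (List S → PMF S) → List S → ENNReal
  | _, [] => 1
  | D, x :: l => D [] x * Cw (fun l => D (x :: l)) l

theorem Cw_snoc {S : Type} (D : List S → PMF S) (l : List S) (t : S) :
    Cw D (l ++ [t]) = Cw D l * D l t := by
  induction l generalizing D with
  | nil => simp [Cw]
  | cons x l ih => simp [Cw, ih, mul_assoc]

/-- level-n support -/
def supp {S : Type} (D : List S → PMF S) : ℕ → Set (List S)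
  | 0 => {[]}
  | n+1 => ⋃ l ∈ supp D n, (fun t => l ++ [t]) '' (D l).support

theorem supp_countable {S : Type} (D : List S → PMF S) (n : ℕ) : (supp D n).Countable := by
  induction n with
  | zero => exact Set.countable_singleton _
  | succ n ih => exact ih.biUnion fun l _ => ((D l).support_countable).image _

theorem supp_length {S : Type} (D : List S → PMF S) (n : ℕ) :
    ∀ l ∈ supp D n, l.length = n := by
  induction n with
  | zero => intro l hl; simp [supp] at hl; simp [hl]
  | succ n ih =>
    intro l hl
    simp only [supp, Set.mem_iUnion, Set.mem_image] at hl
    obtain ⟨l', h', t, _, rfl⟩ := hl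
    simp [ih l' h']

theorem ae_supp {S : Type} (D : List S → PMF S) (μ : Measure (PathSpace S)) [IsFiniteMeasure μ]
    (h : ∀ l, μ (cyl l) = Cw D l) (n : ℕ) : ∀ᵐ u ∂μ, pre n u ∈ supp D n := by
  induction n with
  | zero => simp [pre, supp]
  | succ n ih =>
    have key : ∀ l ∈ supp D n, ∀ᵐ u ∂μ, u ∈ cyl l → u l.length ∈ (D l).support := by
      intro l _
      have h1 : μ (⋃ t ∈ (D l).support, cyl (l ++ [t])) = μ (cyl l) := by
        rw [measure_biUnion (D l).support_countable]
        · simp only [h, Cw_snoc, ENNReal.tsum_mul_left]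
          have : ∑' t : (D l).support, D l t = 1 := by
            rw [tsum_subtype_eq_of_support_subset (f := fun t => D l t) (s := (D l).support)]
            · exact (D l).tsum_coe
            · exact subset_rfl
          rw [this, mul_one]
        · intro a _ b _ hab
          rw [Function.onFun, Set.disjoint_left]
          intro u hu hu'
          rw [mem_cyl_snoc] at hu hu'
          exact hab (hu.2.symm.trans hu'.2)
        · intro t _; exact meas_cyl _
      have h2 : (⋃ t ∈ (D l).support, cyl (l ++ [t])) ⊆ cyl l := by
        intro u hu
        simp only [Set.mem_iUnion] at hu
        obtain ⟨t, _, hu⟩ := hu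
        exact ((mem_cyl_snoc _ _ _).1 hu).1
      have h3 : μ (cyl l \ ⋃ t ∈ (D l).support, cyl (l ++ [t])) = 0 := by
        rw [measure_sdiff h2 (MeasurableSet.nullMeasurableSet (MeasurableSet.biUnion
          (D l).support_countable fun t _ => meas_cyl _)) (measure_ne_top _ _), h1, tsub_self]
      filter_upwards [measure_eq_zero_iff_ae_notMem.1 h3] with u hu hul
      by_contra hc
      apply hu
      refine ⟨hul, ?_⟩
      simp only [Set.mem_iUnion, not_exists]
      intro t ht hu'
      rw [mem_cyl_snoc] at hu'
      exact hc (hu'.2 ▸ ht)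
    filter_upwards [ih, (ae_ball_iff (supp_countable D n)).2 key] with u h1 h2
    simp only [supp, pre, Set.mem_iUnion]
    refine ⟨_, h1, u n, ?_, rfl⟩
    simpa [pre_length] using h2 _ h1 (mem_cyl_pre n u)

theorem measure_pre {S : Type} (D : List S → PMF S) (μ : Measure (PathSpace S)) [IsFiniteMeasure μ]
    (h : ∀ l, μ (cyl l) = Cw D l) (n : ℕ) (B : Set (List S)) :
    μ {u | pre n u ∈ B} = ∑' l : ↥(supp D n ∩ B), Cw D l := by
  have hc : (supp D n ∩ B).Countable := (supp_countable D n).mono Set.inter_subset_left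
  have : μ {u | pre n u ∈ B} = μ (⋃ l ∈ supp D n ∩ B, cyl l) := by
    apply measure_congr
    filter_upwards [ae_supp D μ h n] with u hu
    apply propext
    show pre n u ∈ B ↔ u ∈ ⋃ l ∈ supp D n ∩ B, cyl l
    simp only [Set.mem_iUnion]
    constructor
    · intro hB; exact ⟨_, ⟨hu, hB⟩, mem_cyl_pre _ _⟩
    · rintro ⟨l, ⟨hl, hB⟩, hul⟩
      rw [mem_cyl_iff, supp_length D n l hl] at hul
      rwa [hul]
  rw [this, measure_biUnion hc _ (fun l _ => meas_cyl l)]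
  · simp only [h]
  · intro a ha b hb hab
    rw [Function.onFun, Set.disjoint_left]
    intro u hu hu'
    rw [mem_cyl_iff, supp_length D n _ ha.1] at hu
    rw [mem_cyl_iff, supp_length D n _ hb.1] at hu'
    exact hab (hu.symm.trans hu')

theorem measure_unique {S : Type} (D : List S → PMF S) (μ ν : Measure (PathSpace S))
    [IsProbabilityMeasure μ] [IsProbabilityMeasure ν]
    (h : ∀ l, μ (cyl l) = Cw D l) (h' : ∀ l, ν (cyl l) = Cw D l) : μ = ν := by
  let _ : MeasurableSpace S := ⊤
  refine ext_of_generate_finite (α := PathSpace S)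
    (squareCylinders fun _ : ℕ => {s : Set S | MeasurableSet s})
    (generateFrom_squareCylinders (α := fun _ : ℕ => S)).symm
    (isPiSystem_squareCylinders (fun _ => MeasurableSpace.isPiSystem_measurableSet) (by simp))
    ?_ (by simp)
  rintro _ ⟨s, t, _, rfl⟩
  have : ((s : Set ℕ).pi t : Set (PathSpace S)) =
      {u | pre (s.sup id + 1) u ∈ {l : List S | ∀ i ∈ s, ∀ x, l[i]? = some x → x ∈ t i}} := by
    ext u
    constructor
    · intro hu i hi x hx
      have h2 := pre_getElem (s.sup id + 1) (u : PathSpace S) i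
        (Nat.lt_succ_of_le (Finset.le_sup (f := id) hi))
      have h3 : x = u i := Option.some.inj (hx.symm.trans h2)
      rw [h3]
      exact hu i hi
    · intro hu i hi
      exact hu i hi _ (pre_getElem _ _ _ (Nat.lt_succ_of_le (Finset.le_sup (f := id) hi)))
  rw [this, measure_pre D μ h, measure_pre D ν h']

end MeasureBasics

section MeasureExist

open MeasureTheory

theorem Cw_ne_zero_mem_supp {S : Type} (D : List S → PMF S) (l : List S) (h : Cw D l ≠ 0) :
    l ∈ supp D l.length := by
  induction l using List.reverseRecOn with
  | nil => simp [supp]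
  | append_singleton l t ih =>
    rw [Cw_snoc] at h
    have h1 := left_ne_zero_of_mul h
    have h2 := right_ne_zero_of_mul h
    simp only [List.length_append, List.length_cons, List.length_nil, zero_add, supp,
      Set.mem_iUnion]
    exact ⟨l, ih h1, t, (PMF.mem_support_iff _ _).2 h2, rfl⟩

/-- the countable set of lists with positive weight -/
def posL {S : Type} (D : List S → PMF S) : Set (List S) := {l | Cw D l ≠ 0}

theorem posL_countable {S : Type} (D : List S → PMF S) : (posL D).Countable := by
  refine (Set.countable_iUnion (supp_countable D)).mono ?_
  intro l hl
  exact Set.mem_iUnion.2 ⟨_, Cw_ne_zero_mem_supp D l hl⟩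

/-- history after `n` steps -/
def hst {S : Type} (T : Set (List S)) (d : S) (ω : List S → S) : ℕ → List S
  | 0 => []
  | n+1 => hst T d ω n ++ [if hst T d ω n ∈ T then ω (hst T d ω n) else d]

/-- path from choices -/
def chp {S : Type} (T : Set (List S)) (d : S) (ω : List S → S) : PathSpace S :=
  fun n => if hst T d ω n ∈ T then ω (hst T d ω n) else d

theorem pre_chp {S : Type} (T : Set (List S)) (d : S) (ω : List S → S) (n : ℕ) :
    pre n (chp T d ω) = hst T d ω n := by
  induction n with
  | zero => rfl
  | succ n ih => simp [pre, hst, ih, chp]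

theorem Cw_prefix {S : Type} (D : List S → PMF S) (l l' : List S) (h : Cw D (l ++ l') ≠ 0) :
    Cw D l ≠ 0 := by
  induction l' using List.reverseRecOn with
  | nil => simpa using h
  | append_singleton l' t ih =>
    rw [← List.append_assoc, Cw_snoc] at h
    exact ih (left_ne_zero_of_mul h)

theorem Cw_prod {S : Type} (D : List S → PMF S) (d : S) (l : List S) :
    Cw D l = ∏ i ∈ Finset.range l.length, D (l.take i) (l.getD i d) := by
  induction l using List.reverseRecOn with
  | nil => simp [Cw]
  | append_singleton l t ih =>
    rw [Cw_snoc, ih]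
    simp only [List.length_append, List.length_cons, List.length_nil, zero_add]
    rw [Finset.prod_range_succ]
    congr 1
    · apply Finset.prod_congr rfl
      intro i hi
      have hi := Finset.mem_range.1 hi
      rw [List.take_append_of_le_length hi.le, List.getD_append _ _ _ _ hi]
    · simp [List.getD_append_right]

theorem mem_cyl_chp {S : Type} (D : List S → PMF S) (d : S) (l t : _) (h : Cw D (l ++ [t]) ≠ 0)
    (ω : List S → S) :
    chp (posL D) d ω ∈ cyl (l ++ [t]) ↔ chp (posL D) d ω ∈ cyl l ∧ ω l = t := by
  rw [mem_cyl_snoc]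
  refine and_congr_right fun h1 => ?_
  rw [mem_cyl_iff, pre_chp] at h1
  have : l ∈ posL D := Cw_prefix D l [t] h
  rw [chp, h1, if_pos this]

theorem mem_cyl_chp' {S : Type} (D : List S → PMF S) (d : S) (l : List S) (h : Cw D l ≠ 0)
    (ω : List S → S) :
    chp (posL D) d ω ∈ cyl l ↔ ∀ i < l.length, ω (l.take i) = l.getD i d := by
  induction l using List.reverseRecOn with
  | nil => simp [cyl_nil]
  | append_singleton l t ih =>
    rw [mem_cyl_chp D d l t h, ih (Cw_prefix D l [t] h)]
    simp only [List.length_append, List.length_cons, List.length_nil, zero_add]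
    constructor
    · rintro ⟨h1, h2⟩ i hi
      rcases Nat.lt_succ_iff_lt_or_eq.1 hi with hi | hi
      · rw [List.take_append_of_le_length hi.le, List.getD_append _ _ _ _ hi, h1 i hi]
      · subst hi; simp [List.getD_append_right, h2]
    · intro h1
      constructor
      · intro i hi
        have := h1 i (by omega)
        rwa [List.take_append_of_le_length hi.le, List.getD_append _ _ _ _ hi] at this
      · simpa [List.getD_append_right] using h1 l.length (by omega)

theorem exists_measure {S : Type} (D : List S → PMF S) :
    ∃ μ : Measure (PathSpace S), IsProbabilityMeasure μ ∧ ∀ l, μ (cyl l) = Cw D l := by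
  let mS : MeasurableSpace S := ⊤
  obtain ⟨d, _⟩ := (D []).support_nonempty
  let P : Measure (List S → S) := Measure.infinitePi (fun l => (D l).toMeasure)
  have hcoord : ∀ (l : List S) (B : Set S), MeasurableSet {ω : List S → S | ω l ∈ B} :=
    fun l B => (measurable_pi_apply l) (MeasurableSpace.measurableSet_top (s := B))
  have hT := posL_countable D
  have hm : ∀ n (B : Set S), MeasurableSet {ω : List S → S | chp (posL D) d ω n ∈ B} := by
    intro n
    induction n using Nat.strong_induction_on with
    | _ n ih =>
      intro B
      have hh : ∀ l : List S, MeasurableSet {ω : List S → S | hst (posL D) d ω n = l} := by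
        intro l
        have : {ω : List S → S | hst (posL D) d ω n = l} =
            if l.length = n then ⋂ i : Fin l.length,
              {ω | chp (posL D) d ω i ∈ ({l.get i} : Set S)} else ∅ := by
          split_ifs with hl
          · ext ω
            subst hl
            have := mem_cyl_iff l (chp (posL D) d ω)
            rw [pre_chp] at this
            exact this.symm.trans (by simp [cyl])
          · ext ω
            simp only [Set.mem_empty_iff_false, iff_false]
            intro h
            apply hl
            have h : hst (posL D) d ω n = l := h
            rw [← h, ← pre_chp, pre_length]
        rw [this]
        split_ifs with hl
        · exact MeasurableSet.iInter fun i => ih i (by omega) _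
        · exact MeasurableSet.empty
      have : {ω : List S → S | chp (posL D) d ω n ∈ B} =
          (⋃ l ∈ posL D, ({ω | hst (posL D) d ω n = l} ∩ {ω | ω l ∈ B})) ∪
          ((⋃ l ∈ posL D, {ω | hst (posL D) d ω n = l})ᶜ ∩ {_ω | d ∈ B}) := by
        ext ω
        by_cases h : hst (posL D) d ω n ∈ posL D
        · simp [chp, h]
        · simp only [chp, h, if_false]
          simp [h]
          intro _ i hi h2
          exact h (h2 ▸ hi)
      rw [this]
      refine MeasurableSet.union (MeasurableSet.biUnion hT fun l _ => (hh l).inter (hcoord l B))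
        (MeasurableSet.inter (MeasurableSet.compl (MeasurableSet.biUnion hT fun l _ => hh l)) ?_)
      exact MeasurableSet.const (d ∈ B)
  have hmeas : Measurable (chp (posL D) d) := meas_into _ hm
  have hP : IsProbabilityMeasure (P.map (chp (posL D) d)) :=
    Measure.isProbabilityMeasure_map hmeas.aemeasurable
  refine ⟨P.map (chp (posL D) d), hP, ?_⟩
  have main : ∀ l, Cw D l ≠ 0 → P.map (chp (posL D) d) (cyl l) = Cw D l := by
    intro l hl
    rw [Measure.map_apply hmeas (meas_cyl l)]
    have : chp (posL D) d ⁻¹' cyl l = Set.pi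
        (((Finset.range l.length).image (fun i => l.take i) : Finset (List S)) : Set (List S))
        (fun l' => {l.getD l'.length d}) := by
      ext ω
      rw [Set.mem_preimage, mem_cyl_chp' D d l hl]
      simp only [Set.mem_pi, Finset.coe_image, Set.mem_image, Finset.mem_coe, Finset.mem_range,
        forall_exists_index, and_imp, forall_apply_eq_imp_iff₂, Set.mem_singleton_iff]
      refine forall₂_congr fun i hi => ?_
      rw [List.length_take, min_eq_left hi.le]
    rw [this, Measure.infinitePi_pi _ (fun _ _ => MeasurableSpace.measurableSet_top),
      Finset.prod_image, Cw_prod D d]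
    · apply Finset.prod_congr rfl
      intro i hi
      have hi := Finset.mem_range.1 hi
      rw [List.length_take, min_eq_left hi.le, PMF.toMeasure_apply_singleton]
      exact MeasurableSpace.measurableSet_top
    · intro i hi j hj hij
      have hi : i < l.length := by simpa using hi
      have hj : j < l.length := by simpa using hj
      have := congrArg List.length hij
      simpa [hi.le, hj.le] using this
  intro l
  induction l using List.reverseRecOn with
  | nil => rw [cyl_nil, measure_univ]; rfl
  | append_singleton l t ih =>
    by_cases h : Cw D (l ++ [t]) = 0
    · rw [h]
      by_cases h1 : Cw D l = 0
      · refine measure_mono_null ?_ (ih.trans h1)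
        intro u hu
        exact ((mem_cyl_snoc _ _ _).1 hu).1
      · have h2 : D l t = 0 := by
          rw [Cw_snoc] at h
          exact (mul_eq_zero.1 h).resolve_left h1
        rw [Measure.map_apply hmeas (meas_cyl _)]
        refine measure_mono_null (t := {ω | ω l ∈ ({t} : Set S)}) ?_ ?_
        · intro ω hω
          have hω := (mem_cyl_snoc _ _ _).1 (Set.mem_preimage.1 hω)
          have h3 := (mem_cyl_iff _ _).1 hω.1
          rw [pre_chp] at h3
          have h4 := hω.2
          rw [chp, h3, if_pos (show l ∈ posL D from h1)] at h4
          exact h4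
        · have := Measure.infinitePi_pi (fun l => (D l).toMeasure) (s := {l})
            (t := fun _ => {t}) (fun _ _ => MeasurableSpace.measurableSet_top)
          have h5 : (D l).toMeasure {t} = 0 := by
            rw [PMF.toMeasure_apply_singleton _ _ MeasurableSpace.measurableSet_top, h2]
          rw [Finset.prod_singleton, h5] at this
          rw [← this]
          congr 1
          ext ω; simp
    · exact main _ h

/-- the trajectory measure -/
def tm {S : Type} (D : List S → PMF S) : Measure (PathSpace S) := (exists_measure D).choose

instance tm_prob {S : Type} (D : List S → PMF S) : IsProbabilityMeasure (tm D) :=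
  (exists_measure D).choose_spec.1

theorem tm_cyl {S : Type} (D : List S → PMF S) (l : List S) : tm D (cyl l) = Cw D l :=
  (exists_measure D).choose_spec.2 l

theorem tm_unique {S : Type} (D : List S → PMF S) (μ : Measure (PathSpace S))
    [IsProbabilityMeasure μ] (h : ∀ l, μ (cyl l) = Cw D l) : μ = tm D :=
  measure_unique D μ (tm D) h (tm_cyl D)

theorem tm_step {S : Type} (D : List S → PMF S) :
    tm D = Measure.sum (fun x => D [] x • (tm (fun l => D (x :: l))).map (pcons x)) := by
  symm
  have hap : ∀ B, MeasurableSet B →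
      Measure.sum (fun x => D [] x • (tm (fun l => D (x :: l))).map (pcons x)) B =
        ∑' x, D [] x * tm (fun l => D (x :: l)) (pcons x ⁻¹' B) := by
    intro B hB
    rw [Measure.sum_apply _ hB]
    congr 1
    ext x
    rw [Measure.smul_apply, Measure.map_apply (meas_pcons x) hB, smul_eq_mul]
  have hp : IsProbabilityMeasure
      (Measure.sum (fun x => D [] x • (tm (fun l => D (x :: l))).map (pcons x))) := by
    constructor
    rw [hap _ MeasurableSet.univ]
    simp [PMF.tsum_coe]
  refine tm_unique D _ ?_
  intro l
  cases l with
  | nil => rw [cyl_nil, measure_univ]; rfl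
  | cons x l =>
    rw [hap _ (meas_cyl _), tsum_eq_single x]
    · have : pcons x ⁻¹' cyl (x :: l) = cyl l := by
        ext u; simp [mem_cyl_cons]
      rw [this, tm_cyl, Cw]
    · intro y hy
      have : pcons y ⁻¹' cyl (x :: l) = ∅ := by
        ext u; simp [mem_cyl_cons, hy]
      rw [this]; simp

theorem lint_step {S : Type} (D : List S → PMF S) (f : PathSpace S → ENNReal) (hf : Measurable f) :
    ∫⁻ u, f u ∂(tm D) = ∑' x, D [] x * ∫⁻ u, f (pcons x u) ∂(tm (fun l => D (x :: l))) := by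
  rw [tm_step D, lintegral_sum_measure]
  congr 1; ext x
  rw [lintegral_smul_measure, lintegral_map hf (meas_pcons x), smul_eq_mul]

theorem lint_pure {S : Type} (D : List S → PMF S) (s : S) (h : D [] = PMF.pure s)
    (f : PathSpace S → ENNReal) (hf : Measurable f) :
    ∫⁻ u, f u ∂(tm D) = ∫⁻ u, f (pcons s u) ∂(tm (fun l => D (s :: l))) := by
  rw [lint_step D f hf, tsum_eq_single s]
  · simp [h]
  · intro y hy; simp [h, hy]

theorem ae_pure {S : Type} (D : List S → PMF S) (s : S) (h : D [] = PMF.pure s) :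
    ∀ᵐ u ∂(tm D), u 0 = s := by
  have h1 : tm D (cyl [s]) = 1 := by simp [tm_cyl, Cw, h]
  have h2 : ∀ᵐ u ∂(tm D), u ∈ cyl [s] := by
    rw [← prob_compl_eq_zero_iff (meas_cyl _)] at h1
    exact h1
  filter_upwards [h2] with u hu
  exact ((mem_cyl_cons _ _ _).1 hu).1

end MeasureExist

section Hitting

open MeasureTheory

/-- path stopped at the first visit to `T` -/
def stopK {S : Type} (T : Set S) (u : PathSpace S) : PathSpace S := fun n =>
  Nat.rec (motive := fun _ => PathSpace S → S) (fun u => u 0)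
    (fun _ r u => if u 0 ∈ T then u 0 else r (ptail u)) n u

theorem stopK_zero {S : Type} (T : Set S) (u : PathSpace S) : stopK T u 0 = u 0 := rfl
theorem stopK_succ {S : Type} (T : Set S) (u : PathSpace S) (n : ℕ) :
    stopK T u (n+1) = if u 0 ∈ T then u 0 else stopK T (ptail u) n := rfl

theorem stopK_pcons {S : Type} (T : Set S) (x : S) (hx : x ∉ T) (u : PathSpace S) :
    stopK T (pcons x u) = pcons x (stopK T u) := by
  funext n
  cases n with
  | zero => rfl
  | succ n => rw [stopK_succ, if_neg (by simpa using hx)]; rfl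

theorem stopK_pcons_mem {S : Type} (T : Set S) (x : S) (hx : x ∈ T) (u : PathSpace S) (n : ℕ) :
    stopK T (pcons x u) n = x := by
  cases n with
  | zero => rfl
  | succ n => rw [stopK_succ, if_pos (by simpa using hx)]; rfl

theorem stopK_nohit {S : Type} (T : Set S) (u : PathSpace S) (h : ∀ n, u n ∉ T) :
    stopK T u = u := by
  funext n
  induction n generalizing u with
  | zero => rfl
  | succ n ih => rw [stopK_succ, if_neg (h 0), ih (ptail u) fun n => h (n+1)]; rfl

theorem meas_stopK {S : Type} (T : Set S) : Measurable (stopK T) := by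
  apply meas_into
  intro n
  induction n with
  | zero => intro B; exact meas_coord 0 B
  | succ n ih =>
    intro B
    have : {u | stopK T u (n+1) ∈ B} = ({u | u 0 ∈ T} ∩ {u | u 0 ∈ B}) ∪
        ({u | u 0 ∈ T}ᶜ ∩ ptail ⁻¹' {u | stopK T u n ∈ B}) := by
      ext u
      by_cases h : u 0 ∈ T <;> simp [stopK_succ, h]
    rw [this]
    exact ((meas_coord 0 T).inter (meas_coord 0 B)).union
      ((meas_coord 0 T).compl.inter (meas_ptail (ih B)))

theorem Cw_const {S : Type} (D : List S → PMF S) (t : S)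
    (h : ∀ n, D (List.replicate n t) = PMF.pure t) (l : List S) :
    Cw D l = if ∀ x ∈ l, x = t then 1 else 0 := by
  induction l generalizing D with
  | nil => simp [Cw]
  | cons x l ih =>
    rw [Cw]
    have h0 : D [] = PMF.pure t := h 0
    by_cases hx : x = t
    · subst hx
      rw [ih (fun l => D (x :: l)) (fun n => h (n+1)), h0]
      simp
    · simp [h0, hx]

theorem map_stopK {S : Type} (T : Set S) (D D' : List S → PMF S)
    (h1 : ∀ h : List S, (∀ x ∈ h, x ∉ T) → D h = D' h)
    (h2 : ∀ (h : List S), ∀ t ∈ T, D' (h ++ [t]) = PMF.pure t) :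
    (tm D).map (stopK T) = tm D' := by
  have : IsProbabilityMeasure ((tm D).map (stopK T)) :=
    Measure.isProbabilityMeasure_map (meas_stopK T).aemeasurable
  refine tm_unique D' _ ?_
  intro l
  rw [Measure.map_apply (meas_stopK T) (meas_cyl l)]
  induction l generalizing D D' with
  | nil => simp [cyl_nil, Cw]
  | cons x l ih =>
    have e1 : ∀ A, MeasurableSet A → tm D A = ∑' y, D [] y *
        tm (fun l => D (y :: l)) (pcons y ⁻¹' A) := by
      intro A hA
      rw [← lintegral_indicator_one hA, lint_step D _ (measurable_one.indicator hA)]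
      congr 1; ext y
      rw [← lintegral_indicator_one (meas_pcons y hA)]
      rfl
    rw [e1 _ (meas_stopK T (meas_cyl _)), tsum_eq_single x]
    · rw [Cw, h1 [] (by simp)]
      congr 1
      by_cases hx : x ∈ T
      · rw [Cw_const (fun l => D' (x :: l)) x]
        · have : ∀ u, pcons x u ∈ stopK T ⁻¹' cyl (x :: l) ↔ ∀ y ∈ l, y = x := by
            intro u
            rw [Set.mem_preimage]
            have : stopK T (pcons x u) = fun _ => x := funext (stopK_pcons_mem T x hx u)
            rw [this]
            simp only [cyl]
            constructor
            · intro h y hy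
              obtain ⟨i, rfl⟩ := List.mem_iff_get.1 hy
              exact (h i.succ).symm
            · rintro h ⟨i, hi⟩
              cases i with
              | zero => rfl
              | succ i => exact (h _ (List.get_mem l ⟨i, by simpa using hi⟩)).symm
          by_cases hl : ∀ y ∈ l, y = x
          · rw [if_pos hl]
            have : pcons x ⁻¹' (stopK T ⁻¹' cyl (x :: l)) = Set.univ := by
              ext u; simpa using (this u).2 hl
            rw [this, measure_univ]
          · rw [if_neg hl]
            have : pcons x ⁻¹' (stopK T ⁻¹' cyl (x :: l)) = ∅ := by
              ext u
              simp only [Set.mem_empty_iff_false, iff_false]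
              exact fun h => hl ((this u).1 h)
            rw [this, measure_empty]
        · intro n
          rw [← List.replicate_succ, List.replicate_succ']
          exact h2 _ _ hx
      · rw [← ih (fun l => D (x :: l)) (fun l => D' (x :: l))]
        · congr 1
          ext u
          simp only [Set.mem_preimage, stopK_pcons T x hx, mem_cyl_cons, ptail_pcons, pcons_zero,
            true_and]
        · intro h hh
          exact h1 _ (by simpa using ⟨hx, hh⟩)
        · intro h t ht
          exact h2 (x :: h) t ht
        · exact Measure.isProbabilityMeasure_map (meas_stopK T).aemeasurable
    · intro y hy
      have : pcons y ⁻¹' (stopK T ⁻¹' cyl (x :: l)) = ∅ := by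
        ext u
        simp only [Set.mem_preimage, mem_cyl_cons, stopK_zero, pcons_zero, hy, false_and,
          Set.mem_empty_iff_false]
      rw [this]; simp

/-- first hit at time n -/
def hitAt {S : Type} (T : Set S) : ℕ → Set (PathSpace S)
  | 0 => {u | u 0 ∈ T}
  | n+1 => {u | u 0 ∈ T}ᶜ ∩ ptail ⁻¹' hitAt T n

theorem meas_hitAt {S : Type} (T : Set S) (n : ℕ) : MeasurableSet (hitAt T n) := by
  induction n with
  | zero => exact meas_coord 0 T
  | succ n ih => exact (meas_coord 0 T).compl.inter (meas_ptail ih)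

theorem hitAt_mem {S : Type} (T : Set S) (n : ℕ) (u : PathSpace S) :
    u ∈ hitAt T n ↔ u n ∈ T ∧ ∀ m < n, u m ∉ T := by
  induction n generalizing u with
  | zero => simp [hitAt]
  | succ n ih =>
    simp only [hitAt, Set.mem_inter_iff, Set.mem_preimage, ih, Set.mem_compl_iff]
    constructor
    · rintro ⟨h0, h1, h2⟩
      refine ⟨h1, fun m hm => ?_⟩
      cases m with
      | zero => exact h0
      | succ m => exact h2 m (by omega)
    · rintro ⟨h1, h2⟩
      exact ⟨h2 0 (by omega), h1, fun m hm => h2 (m+1) (by omega)⟩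

/-- shift invariance of functions along non-`T` states -/
def ShInv {S : Type} (T E : Set S) (f : PathSpace S → ENNReal) : Prop :=
  ∀ s ∉ T, ∀ u : PathSpace S, (s ∉ E ∨ u 0 = s) → f (pcons s u) = f u

theorem hit_le {S : Type} (T E : Set S) (f₁ f₂ : PathSpace S → ENNReal)
    (m₁ : Measurable f₁) (m₂ : Measurable f₂) (i₁ : ShInv T E f₁) (i₂ : ShInv T E f₂)
    (n : ℕ) (D : List S → PMF S)
    (hE : ∀ h : List S, ∀ s ∈ E, D (h ++ [s]) = PMF.pure s)
    (hT : ∀ h : List S, (∀ x ∈ h, x ∉ T) → ∀ t ∈ T,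
      ∫⁻ u, f₁ (pcons t u) ∂(tm (fun l => D (h ++ t :: l))) ≤
      ∫⁻ u, f₂ (pcons t u) ∂(tm (fun l => D (h ++ t :: l)))) :
    ∫⁻ u, (hitAt T n).indicator f₁ u ∂(tm D) ≤ ∫⁻ u, (hitAt T n).indicator f₂ u ∂(tm D) := by
  induction n generalizing D with
  | zero =>
    rw [lint_step D _ (m₁.indicator (meas_hitAt T 0)), lint_step D _ (m₂.indicator (meas_hitAt T 0))]
    refine ENNReal.tsum_le_tsum fun x => mul_le_mul_right ?_ _
    by_cases hx : x ∈ T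
    · have : ∀ u, pcons x u ∈ hitAt T 0 := fun u => hx
      simp only [Set.indicator_of_mem (this _)]
      exact hT [] (by simp) x hx
    · have : ∀ u, pcons x u ∉ hitAt T 0 := fun u => hx
      simp only [Set.indicator_of_notMem (this _), le_refl]
  | succ n ih =>
    rw [lint_step D _ (m₁.indicator (meas_hitAt T _)), lint_step D _ (m₂.indicator (meas_hitAt T _))]
    refine ENNReal.tsum_le_tsum fun x => mul_le_mul_right ?_ _
    by_cases hx : x ∈ T
    · have : ∀ u, pcons x u ∉ hitAt T (n+1) := fun u h => h.1 hx
      simp only [Set.indicator_of_notMem (this _), le_refl]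
    · have key : ∀ f, ShInv T E f →
          ∫⁻ u, (hitAt T (n+1)).indicator f (pcons x u) ∂(tm (fun l => D (x :: l))) =
          ∫⁻ u, (hitAt T n).indicator f u ∂(tm (fun l => D (x :: l))) := by
        intro f hf
        apply lintegral_congr_ae
        have hae : ∀ᵐ u ∂(tm (fun l => D (x :: l))), x ∉ E ∨ u 0 = x := by
          by_cases hxE : x ∈ E
          · filter_upwards [ae_pure (fun l => D (x :: l)) x (hE [] x hxE)] with u hu
            exact Or.inr hu
          · exact Filter.Eventually.of_forall fun u => Or.inl hxE
        filter_upwards [hae] with u hu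
        by_cases hu' : u ∈ hitAt T n
        · rw [Set.indicator_of_mem hu', Set.indicator_of_mem, hf x hx u hu]
          exact ⟨hx, hu'⟩
        · rw [Set.indicator_of_notMem hu', Set.indicator_of_notMem]
          exact fun h => hu' h.2
      rw [key f₁ i₁, key f₂ i₂]
      apply ih
      · intro h s hs; exact hE (x :: h) s hs
      · intro h hh t ht
        exact hT (x :: h) (by simpa using ⟨hx, hh⟩) t ht

theorem hit_all {S : Type} (T E : Set S) (f₁ f₂ : PathSpace S → ENNReal)
    (m₁ : Measurable f₁) (m₂ : Measurable f₂) (i₁ : ShInv T E f₁) (i₂ : ShInv T E f₂)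
    (D : List S → PMF S)
    (hE : ∀ h : List S, ∀ s ∈ E, D (h ++ [s]) = PMF.pure s)
    (hT : ∀ h : List S, (∀ x ∈ h, x ∉ T) → ∀ t ∈ T,
      ∫⁻ u, f₁ (pcons t u) ∂(tm (fun l => D (h ++ t :: l))) ≤
      ∫⁻ u, f₂ (pcons t u) ∂(tm (fun l => D (h ++ t :: l))))
    (hn : ∀ u : PathSpace S, (∀ n, u n ∉ T) → f₁ u ≤ f₂ u) :
    ∫⁻ u, f₁ u ∂(tm D) ≤ ∫⁻ u, f₂ u ∂(tm D) := by
  have hmU : MeasurableSet (⋃ n, hitAt T n) := MeasurableSet.iUnion (meas_hitAt T)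
  have hdis : Pairwise (Function.onFun Disjoint (hitAt T)) := by
    intro a b hab
    rw [Function.onFun, Set.disjoint_left]
    intro u ha hb
    rw [hitAt_mem] at ha hb
    rcases lt_or_gt_of_ne hab with h | h
    · exact hb.2 _ h ha.1
    · exact ha.2 _ h hb.1
  rw [← lintegral_add_compl f₁ hmU, ← lintegral_add_compl f₂ hmU]
  rw [lintegral_iUnion (meas_hitAt T) hdis, lintegral_iUnion (meas_hitAt T) hdis]
  gcongr ?_ + ?_
  · refine ENNReal.tsum_le_tsum fun n => ?_
    have := hit_le T E f₁ f₂ m₁ m₂ i₁ i₂ n D hE hT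
    rwa [lintegral_indicator (meas_hitAt T n), lintegral_indicator (meas_hitAt T n)] at this
  · apply setLIntegral_mono' hmU.compl
    intro u hu
    apply hn
    intro n
    induction n using Nat.strong_induction_on with
    | _ n ih =>
      intro h
      apply hu
      exact Set.mem_iUnion.2 ⟨n, (hitAt_mem T n u).2 ⟨h, ih⟩⟩

end Hitting

section Payoff

open MeasureTheory

theorem payoff_first {S : Type} (A : Arena S) (pri : S → ℕ) (R : S → ℝ) (u : PathSpace S) (n : ℕ)
    (h : A.E (u n) = ∅) (hm : ∀ m < n, A.E (u m) ≠ ∅) : payoff A pri R u = R (u n) := by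
  have hex : ∃ i, A.E (u i) = ∅ := ⟨n, h⟩
  have : Nat.find hex = n := (Nat.find_eq_iff hex).2 ⟨h, hm⟩
  rw [payoff, dif_pos hex, this]

theorem payoff_inf {S : Type} (A : Arena S) (pri : S → ℕ) (R : S → ℝ) (u : PathSpace S)
    (h : ∀ i, A.E (u i) ≠ ∅) : payoff A pri R u =
      if Even (sSup {n | {i | pri (u i) = n}.Infinite}) then 1 else 0 := by
  rw [payoff, dif_neg (by simpa using h)]

theorem exists_first {p : ℕ → Prop} (h : ∃ n, p n) : ∃ n, p n ∧ ∀ m < n, ¬ p m :=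
  ⟨Nat.find h, Nat.find_spec h, fun _ hm => Nat.find_min h hm⟩

theorem payoff_mem {S : Type} (A : Arena S) (pri : S → ℕ) (R : S → ℝ)
    (hR : ∀ s, 0 ≤ R s ∧ R s ≤ 1) (u : PathSpace S) :
    0 ≤ payoff A pri R u ∧ payoff A pri R u ≤ 1 := by
  rw [payoff]
  split_ifs
  · exact hR _
  · simp
  · simp

theorem inf_pcons {S : Type} (pri : S → ℕ) (s : S) (u : PathSpace S) (n : ℕ) :
    {i | pri (pcons s u i) = n}.Infinite ↔ {i | pri (u i) = n}.Infinite := by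
  rw [← Nat.frequently_atTop_iff_infinite, ← Nat.frequently_atTop_iff_infinite,
    Filter.frequently_atTop, Filter.frequently_atTop]
  constructor
  · intro h a
    obtain ⟨b, hb, h⟩ := h (a+1)
    obtain ⟨c, rfl⟩ : ∃ c, b = c + 1 := ⟨b - 1, by omega⟩
    exact ⟨c, by omega, h⟩
  · intro h a
    obtain ⟨b, hb, h⟩ := h a
    exact ⟨b+1, by omega, h⟩

theorem payoff_pcons {S : Type} (A : Arena S) (pri : S → ℕ) (R : S → ℝ) (s : S) (u : PathSpace S)
    (h : A.E s ≠ ∅ ∨ u 0 = s) : payoff A pri R (pcons s u) = payoff A pri R u := by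
  by_cases hs : A.E s = ∅
  · have h0 : u 0 = s := h.resolve_left (by simpa using hs)
    rw [payoff_first A pri R (pcons s u) 0 hs (by simp),
      payoff_first A pri R u 0 (by rwa [h0]) (by simp), h0]
    rfl
  · by_cases hex : ∃ n, A.E (u n) = ∅
    · obtain ⟨n, hn, hm⟩ := exists_first hex
      rw [payoff_first A pri R u n hn hm, payoff_first A pri R (pcons s u) (n+1) hn]
      · rfl
      · intro m hm'
        cases m with
        | zero => exact hs
        | succ m => exact hm m (by omega)
    · have hex : ∀ n, A.E (u n) ≠ ∅ := by simpa using hex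
      rw [payoff_inf A pri R u hex, payoff_inf A pri R (pcons s u)]
      · simp only [inf_pcons]
      · intro m
        cases m with
        | zero => exact hs
        | succ m => exact hex m

theorem payoff_congr {S : Type} (A B : Arena S) (pri pri' : S → ℕ) (R R' : S → ℝ)
    (u : PathSpace S) (hE : ∀ n, A.E (u n) = B.E (u n)) (hp : ∀ n, pri (u n) = pri' (u n))
    (hR : ∀ n, R (u n) = R' (u n)) : payoff A pri R u = payoff B pri' R' u := by
  by_cases hex : ∃ n, A.E (u n) = ∅
  · obtain ⟨n, hn, hm⟩ := exists_first hex
    rw [payoff_first A pri R u n hn hm, payoff_first B pri' R' u n, hR]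
    · rw [← hE, hn]
    · intro m hm'; rw [← hE]; exact hm m hm'
  · have hex : ∀ n, A.E (u n) ≠ ∅ := by simpa using hex
    rw [payoff_inf A pri R u hex, payoff_inf B pri' R' u (fun n => by rw [← hE]; exact hex n)]
    simp only [hp]

theorem even_sSup_iff (J : Set ℕ) : Even (sSup J) ↔
    (∃ m, m ∈ J ∧ Even m ∧ ∀ n, m < n → n ∉ J) ∨ (∀ n, n ∉ J) ∨ (∀ a, ∃ n, a < n ∧ n ∈ J) := by
  by_cases hb : BddAbove J
  · by_cases hne : J.Nonempty
    · have h1 := Nat.sSup_mem hne hb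
      have h2 : ∀ n, sSup J < n → n ∉ J := fun n hn hJ => absurd (le_csSup hb hJ) (by omega)
      constructor
      · intro h; exact Or.inl ⟨_, h1, h, h2⟩
      · rintro (⟨m, hm, he, h⟩ | h | h)
        · have : sSup J = m := by
            apply le_antisymm
            · by_contra hc
              exact h _ (by omega) h1
            · exact le_csSup hb hm
          rwa [this]
        · exact absurd h1 (h _)
        · obtain ⟨n, hn, hJ⟩ := h (sSup J)
          exact absurd hJ (h2 n hn)
    · rw [Set.not_nonempty_iff_eq_empty] at hne
      subst hne; simp
  · rw [Nat.sSup_of_not_bddAbove hb]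
    simp only [Even.zero, true_iff]
    right; right
    intro a
    rw [not_bddAbove_iff] at hb
    obtain ⟨n, hn, h⟩ := hb a
    exact ⟨n, h, hn⟩

theorem payoff_measurable {S : Type} (A : Arena S) (pri : S → ℕ) (R : S → ℝ) :
    Measurable (payoff A pri R) := by
  intro B _
  have hI : ∀ n, MeasurableSet {u : PathSpace S | n ∈ {n | {i | pri (u i) = n}.Infinite}} := by
    intro n
    have : {u : PathSpace S | n ∈ {n | {i | pri (u i) = n}.Infinite}} =
        ⋂ a : ℕ, ⋃ b : ℕ, ⋃ _ : b ≥ a, {u : PathSpace S | u b ∈ {s | pri s = n}} := by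
      ext u
      have : {i | pri (u i) = n}.Infinite ↔ ∀ a, ∃ b ≥ a, pri (u b) = n := by
        rw [← Nat.frequently_atTop_iff_infinite, Filter.frequently_atTop]
      simpa using this
    rw [this]
    exact MeasurableSet.iInter fun a => MeasurableSet.iUnion fun b => MeasurableSet.iUnion
      fun _ => meas_coord b _
  have hev : MeasurableSet {u : PathSpace S | Even (sSup {n | {i | pri (u i) = n}.Infinite})} := by
    simp only [even_sSup_iff]
    refine MeasurableSet.union ?_ (MeasurableSet.union ?_ ?_)
    · refine MeasurableSet.congr (s := ⋃ m, {u : PathSpace S | m ∈ {n | {i | pri (u i) = n}.Infinite}} ∩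
        ({_u | Even m} ∩ ⋂ n, ⋂ _ : m < n,
        {u : PathSpace S | n ∈ {n | {i | pri (u i) = n}.Infinite}}ᶜ)) ?_ ?_
      · exact MeasurableSet.iUnion fun m => (hI m).inter ((MeasurableSet.const _).inter
          (MeasurableSet.iInter fun n => MeasurableSet.iInter fun _ => (hI n).compl))
      · ext u; simp; rfl
    · refine MeasurableSet.congr (s := ⋂ n,
        {u : PathSpace S | n ∈ {n | {i | pri (u i) = n}.Infinite}}ᶜ) ?_ ?_
      · exact (MeasurableSet.iInter fun n => (hI n).compl)
      · ext u; simp; rfl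
    · refine MeasurableSet.congr (s := ⋂ a : ℕ, ⋃ n : ℕ, ⋃ _ : a < n,
        {u : PathSpace S | n ∈ {n | {i | pri (u i) = n}.Infinite}}) ?_ ?_
      · exact MeasurableSet.iInter fun a => MeasurableSet.iUnion fun n => MeasurableSet.iUnion
          fun _ => hI n
      · ext u; simp; rfl
  have hterm : ∀ n, MeasurableSet {u : PathSpace S | u n ∈ {s | A.E s = ∅}} :=
    fun n => meas_coord n _
  have hfirst : ∀ n, MeasurableSet {u : PathSpace S | A.E (u n) = ∅ ∧ ∀ m < n, A.E (u m) ≠ ∅} := by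
    intro n
    refine MeasurableSet.congr (s := {u : PathSpace S | u n ∈ {s | A.E s = ∅}} ∩
      ⋂ m, ⋂ _ : m < n, {u : PathSpace S | u m ∈ {s | A.E s = ∅}}ᶜ) ?_ ?_
    · exact (hterm n).inter (MeasurableSet.iInter fun m => MeasurableSet.iInter fun _ =>
        (hterm m).compl)
    · ext u; simp
  refine MeasurableSet.congr (s := (⋃ n, {u : PathSpace S | A.E (u n) = ∅ ∧
      ∀ m < n, A.E (u m) ≠ ∅} ∩ {u : PathSpace S | u n ∈ {s | R s ∈ B}}) ∪
      ((⋂ n, {u : PathSpace S | u n ∈ {s | A.E s = ∅}}ᶜ) ∩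
      (({u : PathSpace S | Even (sSup {n | {i | pri (u i) = n}.Infinite})} ∩ {_u | (1:ℝ) ∈ B}) ∪
      ({u : PathSpace S | Even (sSup {n | {i | pri (u i) = n}.Infinite})}ᶜ ∩ {_u | (0:ℝ) ∈ B})))) ?_ ?_
  · refine MeasurableSet.union (MeasurableSet.iUnion fun n => (hfirst n).inter (meas_coord n _)) ?_
    exact (MeasurableSet.iInter fun n => (hterm n).compl).inter
      ((hev.inter (MeasurableSet.const _)).union (hev.compl.inter (MeasurableSet.const _)))
  · ext u
    by_cases hex : ∃ n, A.E (u n) = ∅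
    · obtain ⟨n, hn, hm⟩ := exists_first hex
      rw [Set.mem_preimage, payoff_first A pri R u n hn hm]
      constructor
      · rintro (h | ⟨h, _⟩)
        · obtain ⟨n', ⟨hn', hm'⟩, h⟩ := Set.mem_iUnion.1 h
          have : n' = n := by
            rcases lt_trichotomy n n' with h | h | h
            · exact absurd hn (hm' _ h)
            · exact h.symm
            · exact absurd hn' (hm _ h)
          subst this
          exact h
        · exact absurd hn (Set.mem_iInter.1 h n)
      · intro h
        exact Or.inl (Set.mem_iUnion.2 ⟨n, ⟨hn, hm⟩, h⟩)
    · have hex : ∀ n, A.E (u n) ≠ ∅ := by simpa using hex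
      rw [Set.mem_preimage, payoff_inf A pri R u hex]
      constructor
      · rintro (h | ⟨_, h⟩)
        · obtain ⟨n', ⟨hn', hm'⟩, h⟩ := Set.mem_iUnion.1 h
          exact absurd hn' (hex _)
        · rcases h with ⟨h1, h2⟩ | ⟨h1, h2⟩
          · rw [if_pos (show Even (sSup {n | {i | pri (u i) = n}.Infinite}) from h1)]; exact h2
          · rw [if_neg (show ¬ Even (sSup {n | {i | pri (u i) = n}.Infinite}) from h1)]; exact h2
      · intro h
        refine Or.inr ⟨Set.mem_iInter.2 hex, ?_⟩
        split_ifs at h with he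
        · exact Or.inl ⟨he, h⟩
        · exact Or.inr ⟨he, h⟩

end Payoff

section Bridge

open MeasureTheory

/-- Nature's distribution -/
def natPMF {S : Type} (A : Arena S) (s : S) : PMF S :=
  if h : ∃ p : PMF S, ∀ t, p t = ENNReal.ofReal (A.prob s t) then h.choose else PMF.pure s

theorem natPMF_apply {S : Type} (A : Arena S) (hA : A.Wellformed) (s t : S)
    (hs : A.owner s = Player.nature) : natPMF A s t = ENNReal.ofReal (A.prob s t) := by
  have h : ∃ p : PMF S, ∀ t, p t = ENNReal.ofReal (A.prob s t) := by
    obtain ⟨h0, h1, _⟩ := hA s hs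
    refine ⟨⟨fun t => ENNReal.ofReal (A.prob s t), ?_⟩, fun t => rfl⟩
    have := ENNReal.ofReal_tsum_of_nonneg h0 h1.summable
    rw [h1.tsum_eq, ENNReal.ofReal_one] at this
    rw [this]
    exact ENNReal.summable.hasSum
  rw [natPMF, dif_pos h]
  exact h.choose_spec t

/-- one-step kernel -/
def kap {S : Type} (A : Arena S) (σ1 : Strategy A Player.one) (σ2 : Strategy A Player.two)
    (h : List S) (s : S) : PMF S :=
  if A.E s = ∅ then PMF.pure s else
    match A.owner s with
    | Player.one => PMF.pure (σ1.next h s)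
    | Player.two => PMF.pure (σ2.next h s)
    | Player.nature => natPMF A s

/-- kernel on full histories -/
def Dg {S : Type} (A : Arena S) (σ1 : Strategy A Player.one) (σ2 : Strategy A Player.two)
    (s0 : S) (l : List S) : PMF S :=
  match l.reverse with
  | [] => PMF.pure s0
  | s :: r => kap A σ1 σ2 r.reverse s

theorem Dg_nil {S : Type} (A : Arena S) (σ1 : Strategy A Player.one) (σ2 : Strategy A Player.two)
    (s0 : S) : Dg A σ1 σ2 s0 [] = PMF.pure s0 := rfl

theorem Dg_snoc {S : Type} (A : Arena S) (σ1 : Strategy A Player.one) (σ2 : Strategy A Player.two)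
    (s0 : S) (l : List S) (s : S) : Dg A σ1 σ2 s0 (l ++ [s]) = kap A σ1 σ2 l s := by
  simp [Dg]

theorem pathProb_snoc {S : Type} (A : Arena S) (l : List S) (s t : S) :
    pathProb A (l ++ [s, t]) = pathProb A (l ++ [s]) * stepProb A s t := by
  induction l with
  | nil => simp [pathProb]
  | cons x l ih =>
    cases l with
    | nil => simp [pathProb]
    | cons y l =>
      simp only [List.cons_append, pathProb] at ih ⊢
      rw [ih, mul_assoc]

/-- the step relation -/
def StepOK {S : Type} (A : Arena S) (σ1 : Strategy A Player.one) (σ2 : Strategy A Player.two)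
    (l : List S) (s t : S) : Prop :=
  (A.owner s = Player.one ∧ A.E s ≠ ∅ ∧ t = σ1.next l s) ∨
  (A.owner s = Player.two ∧ A.E s ≠ ∅ ∧ t = σ2.next l s) ∨
  (A.owner s = Player.nature ∧ t ∈ A.E s) ∨ (A.E s = ∅ ∧ t = s)

theorem snoc2_inj {S : Type} {l l' : List S} {s s' t t' : S} (h : l ++ [s, t] = l' ++ [s', t']) :
    l = l' ∧ s = s' ∧ t = t' := by
  have := congrArg List.reverse h
  simp at this
  tauto

theorem MC_snoc {S : Type} (A : Arena S) (σ1 : Strategy A Player.one) (σ2 : Strategy A Player.two)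
    (s0 : S) (l : List S) (s t : S) :
    MC A σ1 σ2 s0 (l ++ [s, t]) ↔ MC A σ1 σ2 s0 (l ++ [s]) ∧ StepOK A σ1 σ2 l s t := by
  constructor
  · intro h
    generalize hk : l ++ [s, t] = k at h
    cases h with
    | root =>
      have := congrArg List.length hk
      simp at this
    | one l' s' h h1 h2 =>
      obtain ⟨rfl, rfl, rfl⟩ := snoc2_inj hk
      exact ⟨h, Or.inl ⟨h1, h2, rfl⟩⟩
    | two l' s' h h1 h2 =>
      obtain ⟨rfl, rfl, rfl⟩ := snoc2_inj hk
      exact ⟨h, Or.inr (Or.inl ⟨h1, h2, rfl⟩)⟩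
    | nature l' s' t' h h1 h2 =>
      obtain ⟨rfl, rfl, rfl⟩ := snoc2_inj hk
      exact ⟨h, Or.inr (Or.inr (Or.inl ⟨h1, h2⟩))⟩
    | term l' s' h h1 =>
      obtain ⟨rfl, rfl, rfl⟩ := snoc2_inj hk
      exact ⟨h, Or.inr (Or.inr (Or.inr ⟨h1, rfl⟩))⟩
  · rintro ⟨h, ⟨h1, h2, rfl⟩ | ⟨h1, h2, rfl⟩ | ⟨h1, h2⟩ | ⟨h1, rfl⟩⟩
    · exact MC.one l s h h1 h2
    · exact MC.two l s h h1 h2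
    · exact MC.nature l s t h h1 h2
    · exact MC.term l t h h1

theorem MC_single {S : Type} (A : Arena S) (σ1 : Strategy A Player.one)
    (σ2 : Strategy A Player.two) (s0 s : S) : MC A σ1 σ2 s0 [s] ↔ s = s0 := by
  constructor
  · intro h
    generalize hk : [s] = k at h
    cases h with
    | root => simpa using hk
    | one l' s' h h1 h2 => have := congrArg List.length hk; simp at this
    | two l' s' h h1 h2 => have := congrArg List.length hk; simp at this
    | nature l' s' t' h h1 h2 => have := congrArg List.length hk; simp at this
    | term l' s' h h1 => have := congrArg List.length hk; simp at this
  · rintro rfl; exact MC.root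

theorem nature_nonterm {S : Type} (A : Arena S) (hA : A.Wellformed) (s : S)
    (hs : A.owner s = Player.nature) : A.E s ≠ ∅ := by
  obtain ⟨_, h1, h2⟩ := hA s hs
  intro h
  rw [h2, Function.support_eq_empty_iff] at h
  rw [h] at h1
  exact zero_ne_one (hasSum_zero.unique h1)

theorem kap_apply {S : Type} (A : Arena S) (hA : A.Wellformed) (σ1 : Strategy A Player.one)
    (σ2 : Strategy A Player.two) (l : List S) (s t : S) :
    kap A σ1 σ2 l s t = if StepOK A σ1 σ2 l s t then ENNReal.ofReal (stepProb A s t) else 0 := by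
  by_cases hE : A.E s = ∅
  · have hn : A.owner s ≠ Player.nature := fun h => nature_nonterm A hA s h hE
    simp [kap, hE, StepOK, stepProb, hn]
  · cases ho : A.owner s with
    | one => simp [kap, hE, StepOK, stepProb, ho]
    | two => simp [kap, hE, StepOK, stepProb, ho]
    | nature =>
      simp only [kap, hE, StepOK, stepProb, ho, if_false, if_true]
      rw [natPMF_apply A hA s t ho]
      have := (hA s ho).2.2
      by_cases ht : t ∈ A.E s
      · simp [ht]
      · have h0 : A.prob s t = 0 := by
          rw [this] at ht; simpa using ht
        simp [ht, h0]

theorem stepProb_nonneg {S : Type} (A : Arena S) (hA : A.Wellformed) (s t : S) :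
    0 ≤ stepProb A s t := by
  rw [stepProb]; split_ifs with h
  · exact (hA s h).1 t
  · exact zero_le_one

theorem cylWeight_eq {S : Type} (A : Arena S) (hA : A.Wellformed) (σ1 : Strategy A Player.one)
    (σ2 : Strategy A Player.two) (s0 : S) (l : List S) (s : S) :
    ENNReal.ofReal (cylWeight A σ1 σ2 s0 (l ++ [s])) = Cw (Dg A σ1 σ2 s0) (l ++ [s]) := by
  induction l using List.reverseRecOn generalizing s with
  | nil =>
    simp only [List.nil_append, cylWeight, MC_single, Cw, Dg_nil, pathProb]
    by_cases h : s = s0 <;> simp [h]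
  | append_singleton l x ih =>
    rw [Cw_snoc, ← ih x, Dg_snoc, kap_apply A hA]
    rw [List.append_assoc, List.singleton_append]
    simp only [cylWeight, MC_snoc, pathProb_snoc]
    by_cases h1 : MC A σ1 σ2 s0 (l ++ [x]) <;> by_cases h2 : StepOK A σ1 σ2 l x s
    · simp [h1, h2, ENNReal.ofReal_mul' (stepProb_nonneg A hA x s)]
    · simp [h1, h2]
    · simp [h1]
    · simp [h1]

theorem pathMeasure_eq {S : Type} (A : Arena S) (hA : A.Wellformed) (σ1 : Strategy A Player.one)
    (σ2 : Strategy A Player.two) (s0 : S) :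
    pathMeasure A σ1 σ2 s0 = tm (Dg A σ1 σ2 s0) := by
  have h : ∃ μ : MeasureTheory.Measure (PathSpace S), MeasureTheory.IsProbabilityMeasure μ ∧
      ∀ l : List S, l ≠ [] → μ (cyl l) = ENNReal.ofReal (cylWeight A σ1 σ2 s0 l) := by
    refine ⟨tm (Dg A σ1 σ2 s0), inferInstance, ?_⟩
    intro l hl
    obtain ⟨l', s, rfl⟩ := (List.eq_nil_or_concat' l).resolve_left hl
    rw [tm_cyl, cylWeight_eq A hA]
  rw [pathMeasure, dif_pos h]
  have hp := h.choose_spec.1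
  refine tm_unique _ _ ?_
  intro l
  rcases List.eq_nil_or_concat' l with rfl | ⟨l', s, rfl⟩
  · rw [cyl_nil, measure_univ]; rfl
  · rw [h.choose_spec.2 _ (by simp), cylWeight_eq A hA]

/-- extended payoff -/
def pay {S : Type} (A : Arena S) (pri : S → ℕ) (R : S → ℝ) (u : PathSpace S) : ENNReal :=
  ENNReal.ofReal (payoff A pri R u)

theorem pay_measurable {S : Type} (A : Arena S) (pri : S → ℕ) (R : S → ℝ) :
    Measurable (pay A pri R) := (payoff_measurable A pri R).ennreal_ofReal

/-- expected payoff as lintegral -/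
def lexp {S : Type} (A : Arena S) (pri : S → ℕ) (R : S → ℝ) (σ1 : Strategy A Player.one)
    (σ2 : Strategy A Player.two) (s0 : S) : ENNReal :=
  ∫⁻ u, pay A pri R u ∂(tm (Dg A σ1 σ2 s0))

theorem lexp_le_one {S : Type} (A : Arena S) (pri : S → ℕ) (R : S → ℝ)
    (hR : ∀ s, 0 ≤ R s ∧ R s ≤ 1) (σ1 : Strategy A Player.one)
    (σ2 : Strategy A Player.two) (s0 : S) : lexp A pri R σ1 σ2 s0 ≤ 1 := by
  calc lexp A pri R σ1 σ2 s0 ≤ ∫⁻ _u, 1 ∂(tm (Dg A σ1 σ2 s0)) :=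
        lintegral_mono fun u => by
          show ENNReal.ofReal _ ≤ 1
          simpa using (payoff_mem A pri R hR u).2
    _ = 1 := by simp

theorem expReward_eq {S : Type} (A : Arena S) (hA : A.Wellformed) (pri : S → ℕ) (R : S → ℝ)
    (hR : ∀ s, 0 ≤ R s ∧ R s ≤ 1) (σ1 : Strategy A Player.one)
    (σ2 : Strategy A Player.two) (s0 : S) :
    ENNReal.ofReal (expReward A pri R σ1 σ2 s0) = lexp A pri R σ1 σ2 s0 := by
  have : expReward A pri R σ1 σ2 s0 = (lexp A pri R σ1 σ2 s0).toReal := by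
    rw [expReward, pathMeasure_eq A hA, lexp]
    exact integral_eq_lintegral_of_nonneg_ae
      (Filter.Eventually.of_forall fun u => (payoff_mem A pri R hR u).1)
      (payoff_measurable A pri R).aestronglyMeasurable
  rw [this, ENNReal.ofReal_toReal]
  exact ne_top_of_le_ne_top ENNReal.one_ne_top (lexp_le_one A pri R hR σ1 σ2 s0)

theorem expReward_mem {S : Type} (A : Arena S) (hA : A.Wellformed) (pri : S → ℕ) (R : S → ℝ)
    (hR : ∀ s, 0 ≤ R s ∧ R s ≤ 1) (σ1 : Strategy A Player.one)
    (σ2 : Strategy A Player.two) (s0 : S) :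
    0 ≤ expReward A pri R σ1 σ2 s0 ∧ expReward A pri R σ1 σ2 s0 ≤ 1 := by
  constructor
  · exact integral_nonneg fun u => (payoff_mem A pri R hR u).1
  · have := lexp_le_one A pri R hR σ1 σ2 s0
    rw [← expReward_eq A hA pri R hR] at this
    simpa using this

end Bridge

section Values

open MeasureTheory

theorem strat_nonempty {S : Type} (A : Arena S) (pl : Player) : Nonempty (Strategy A pl) :=
  ⟨⟨fun _ s => if h : (A.E s).Nonempty then h.choose else s, fun _ s _ h => by
    have h' : (A.E s).Nonempty := Set.nonempty_iff_ne_empty.2 h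
    rw [dif_pos h']; exact h'.choose_spec⟩⟩

theorem Strategy_ext {S : Type} {A : Arena S} {pl : Player} {sg τ : Strategy A pl}
    (h : ∀ l s, sg.next l s = τ.next l s) : sg = τ := by
  cases sg; cases τ
  have : (_ : List S → S → S) = _ := funext fun l => funext fun s => h l s
  simp only at this
  subst this; rfl

theorem bdd_above1 {S : Type} (A : Arena S) (hA : A.Wellformed) (pri : S → ℕ) (R : S → ℝ)
  (hR : ∀ s, 0 ≤ R s ∧ R s ≤ 1) (s : S)
     (σ2 : Strategy A Player.two) :
    BddAbove (Set.range fun σ1 : Strategy A Player.one => expReward A pri R σ1 σ2 s) :=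
  ⟨1, by rintro _ ⟨σ1, rfl⟩; exact (expReward_mem A hA pri R hR σ1 σ2 s).2⟩

theorem bdd_below2 {S : Type} (A : Arena S) (hA : A.Wellformed) (pri : S → ℕ) (R : S → ℝ)
  (hR : ∀ s, 0 ≤ R s ∧ R s ≤ 1) (s : S)
     (σ1 : Strategy A Player.one) :
    BddBelow (Set.range fun σ2 : Strategy A Player.two => expReward A pri R σ1 σ2 s) :=
  ⟨0, by rintro _ ⟨σ2, rfl⟩; exact (expReward_mem A hA pri R hR σ1 σ2 s).1⟩

theorem sup_mem {S : Type} (A : Arena S) (hA : A.Wellformed) (pri : S → ℕ) (R : S → ℝ)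
  (hR : ∀ s, 0 ≤ R s ∧ R s ≤ 1) (s : S)
     (σ2 : Strategy A Player.two) :
    0 ≤ (⨆ σ1 : Strategy A Player.one, expReward A pri R σ1 σ2 s) ∧
    (⨆ σ1 : Strategy A Player.one, expReward A pri R σ1 σ2 s) ≤ 1 := by
  have := strat_nonempty A Player.one
  obtain ⟨sg⟩ := strat_nonempty A Player.one
  exact ⟨(expReward_mem A hA pri R hR sg σ2 s).1.trans
    (le_ciSup (bdd_above1 A hA pri R hR s σ2) sg),
    ciSup_le fun σ1 => (expReward_mem A hA pri R hR σ1 σ2 s).2⟩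

theorem inf_mem {S : Type} (A : Arena S) (hA : A.Wellformed) (pri : S → ℕ) (R : S → ℝ)
  (hR : ∀ s, 0 ≤ R s ∧ R s ≤ 1) (s : S)
     (σ1 : Strategy A Player.one) :
    0 ≤ (⨅ σ2 : Strategy A Player.two, expReward A pri R σ1 σ2 s) ∧
    (⨅ σ2 : Strategy A Player.two, expReward A pri R σ1 σ2 s) ≤ 1 := by
  have := strat_nonempty A Player.two
  obtain ⟨sg⟩ := strat_nonempty A Player.two
  exact ⟨le_ciInf fun σ2 => (expReward_mem A hA pri R hR σ1 σ2 s).1,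
    (ciInf_le (bdd_below2 A hA pri R hR s σ1) sg).trans (expReward_mem A hA pri R hR σ1 sg s).2⟩

theorem bdd_sup {S : Type} (A : Arena S) (hA : A.Wellformed) (pri : S → ℕ) (R : S → ℝ)
  (hR : ∀ s, 0 ≤ R s ∧ R s ≤ 1) (s : S)
     : BddBelow (Set.range fun σ2 : Strategy A Player.two =>
    ⨆ σ1 : Strategy A Player.one, expReward A pri R σ1 σ2 s) :=
  ⟨0, by rintro _ ⟨σ2, rfl⟩; exact (sup_mem A hA pri R hR s σ2).1⟩

theorem bdd_inf {S : Type} (A : Arena S) (hA : A.Wellformed) (pri : S → ℕ) (R : S → ℝ)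
  (hR : ∀ s, 0 ≤ R s ∧ R s ≤ 1) (s : S)
     : BddAbove (Set.range fun σ1 : Strategy A Player.one =>
    ⨅ σ2 : Strategy A Player.two, expReward A pri R σ1 σ2 s) :=
  ⟨1, by rintro _ ⟨σ2, rfl⟩; exact (inf_mem A hA pri R hR s σ2).2⟩

theorem upper_mem {S : Type} (A : Arena S) (hA : A.Wellformed) (pri : S → ℕ) (R : S → ℝ)
  (hR : ∀ s, 0 ≤ R s ∧ R s ≤ 1) (s : S)
     : 0 ≤ upperValue A pri R s ∧ upperValue A pri R s ≤ 1 := by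
  have := strat_nonempty A Player.two
  obtain ⟨sg⟩ := strat_nonempty A Player.two
  exact ⟨le_ciInf fun σ2 => (sup_mem A hA pri R hR s σ2).1,
    (ciInf_le (bdd_sup A hA pri R hR s) sg).trans (sup_mem A hA pri R hR s sg).2⟩

theorem lower_nonneg {S : Type} (A : Arena S) (hA : A.Wellformed) (pri : S → ℕ) (R : S → ℝ)
  (hR : ∀ s, 0 ≤ R s ∧ R s ≤ 1) (s : S)
     : 0 ≤ lowerValue A pri R s := by
  obtain ⟨sg⟩ := strat_nonempty A Player.one
  exact (inf_mem A hA pri R hR s sg).1.trans (le_ciSup (bdd_inf A hA pri R hR s) sg)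

theorem lower_le_upper {S : Type} (A : Arena S) (hA : A.Wellformed) (pri : S → ℕ) (R : S → ℝ)
  (hR : ∀ s, 0 ≤ R s ∧ R s ≤ 1) (s : S)
     : lowerValue A pri R s ≤ upperValue A pri R s := by
  have := strat_nonempty A Player.one
  have := strat_nonempty A Player.two
  refine ciSup_le fun σ1 => le_ciInf fun σ2 => ?_
  exact (ciInf_le (bdd_below2 A hA pri R hR s σ1) σ2).trans
    (le_ciSup (bdd_above1 A hA pri R hR s σ2) σ1)

theorem exists_opt2 {S : Type} (A : Arena S) (hA : A.Wellformed) (pri : S → ℕ) (R : S → ℝ)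
  (hR : ∀ s, 0 ≤ R s ∧ R s ≤ 1) (s : S)
     (ε : ℝ) (hε : 0 < ε) : ∃ σ2 : Strategy A Player.two,
    ∀ σ1 : Strategy A Player.one,
      lexp A pri R σ1 σ2 s ≤ ENNReal.ofReal (upperValue A pri R s) + ENNReal.ofReal ε := by
  have := strat_nonempty A Player.two
  obtain ⟨σ2, h⟩ := exists_lt_of_ciInf_lt (lt_add_of_pos_right (upperValue A pri R s) hε)
  refine ⟨σ2, fun σ1 => ?_⟩
  rw [← expReward_eq A hA pri R hR, ← ENNReal.ofReal_add (upper_mem A hA pri R hR s).1 hε.le]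
  exact ENNReal.ofReal_le_ofReal ((le_ciSup (bdd_above1 A hA pri R hR s σ2) σ1).trans h.le)

theorem upper_le {S : Type} (A : Arena S) (hA : A.Wellformed) (pri : S → ℕ) (R : S → ℝ)
  (hR : ∀ s, 0 ≤ R s ∧ R s ≤ 1) (s : S)
     (c : ℝ) (hc : 0 ≤ c) (σ2 : Strategy A Player.two)
    (h : ∀ σ1 : Strategy A Player.one, lexp A pri R σ1 σ2 s ≤ ENNReal.ofReal c) :
    upperValue A pri R s ≤ c := by
  have := strat_nonempty A Player.one
  refine (ciInf_le (bdd_sup A hA pri R hR s) σ2).trans (ciSup_le fun σ1 => ?_)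
  have := h σ1
  rw [← expReward_eq A hA pri R hR] at this
  exact (ENNReal.ofReal_le_ofReal_iff hc).1 this

theorem exists_opt1 {S : Type} (A : Arena S) (hA : A.Wellformed) (pri : S → ℕ) (R : S → ℝ)
  (hR : ∀ s, 0 ≤ R s ∧ R s ≤ 1) (s : S)
     (ε : ℝ) (hε : 0 < ε) : ∃ σ1 : Strategy A Player.one,
    ∀ σ2 : Strategy A Player.two,
      ENNReal.ofReal (lowerValue A pri R s) ≤ lexp A pri R σ1 σ2 s + ENNReal.ofReal ε := by
  have := strat_nonempty A Player.one
  obtain ⟨σ1, h⟩ := exists_lt_of_lt_ciSup (sub_lt_self (lowerValue A pri R s) hε)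
  refine ⟨σ1, fun σ2 => ?_⟩
  rw [← expReward_eq A hA pri R hR, ← ENNReal.ofReal_add
    (expReward_mem A hA pri R hR σ1 σ2 s).1 hε.le]
  refine ENNReal.ofReal_le_ofReal ?_
  have := h.le.trans (ciInf_le (bdd_below2 A hA pri R hR s σ1) σ2)
  linarith

theorem le_lower {S : Type} (A : Arena S) (hA : A.Wellformed) (pri : S → ℕ) (R : S → ℝ)
  (hR : ∀ s, 0 ≤ R s ∧ R s ≤ 1) (s : S)
     (c ε : ℝ) (hε : 0 ≤ ε) (σ1 : Strategy A Player.one)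
    (h : ∀ σ2 : Strategy A Player.two,
      ENNReal.ofReal c ≤ lexp A pri R σ1 σ2 s + ENNReal.ofReal ε) :
    c ≤ lowerValue A pri R s + ε := by
  have := strat_nonempty A Player.two
  have : c - ε ≤ lowerValue A pri R s := by
    refine le_trans (le_ciInf fun σ2 => ?_) (le_ciSup (bdd_inf A hA pri R hR s) σ1)
    have h2 := h σ2
    have h0 := (expReward_mem A hA pri R hR σ1 σ2 s).1
    rw [← expReward_eq A hA pri R hR, ← ENNReal.ofReal_add h0 hε,
      ENNReal.ofReal_le_ofReal_iff (by linarith)] at h2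
    linarith
  linarith

end Values

section Shift

open MeasureTheory

/-- strategy after a history -/
def shiftS {S : Type} {A : Arena S} {pl : Player} (h : List S) (sg : Strategy A pl) :
    Strategy A pl := ⟨fun l s => sg.next (h ++ l) s, fun l s => sg.valid (h ++ l) s⟩

theorem Dg_shift {S : Type} (A : Arena S) (σ1 : Strategy A Player.one)
    (σ2 : Strategy A Player.two) (s0 : S) (h : List S) (t t' : S)
    (hk : kap A σ1 σ2 h t = PMF.pure t') :
    (fun l => Dg A σ1 σ2 s0 (h ++ t :: l)) =
      Dg A (shiftS (h ++ [t]) σ1) (shiftS (h ++ [t]) σ2) t' := by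
  funext l
  rcases List.eq_nil_or_concat' l with rfl | ⟨l', s, rfl⟩
  · rw [Dg_snoc, hk, Dg_nil]
  · rw [Dg_snoc, ← List.cons_append, ← List.append_assoc, Dg_snoc]
    simp [kap, shiftS]

end Shift

section Unfold

open MeasureTheory

/-- abstract unfolding of one fixed point: `A` is the full game, `B` the game stopped at `T` -/
structure Unf {S : Type} (A B : Arena S) (T : Set S) (bd : S → S) (pA pB : S → ℕ) (N : ℕ)
    (RA : S → ℝ) : Prop where
  wA : A.Wellformed
  wB : B.Wellformed
  hE : ∀ s, s ∉ T → A.E s = B.E s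
  ho : ∀ s, s ∉ T → A.owner s = B.owner s
  hprob : A.prob = B.prob
  hpri : ∀ s, s ∉ T → pA s = pB s
  hRA : ∀ s, 0 ≤ RA s ∧ RA s ≤ 1
  tE : ∀ t ∈ T, A.E t = {bd t}
  tO : ∀ t ∈ T, A.owner t = Player.two
  tB : ∀ t ∈ T, B.E t = ∅
  tN : ∀ t ∈ T, pA t = N
  leN : ∀ s, pA s ≤ N
  evN : Even N

/-- compatible rewards of the stopped game -/
structure RComp {S : Type} (T : Set S) (RA RB : S → ℝ) : Prop where
  off : ∀ s, s ∉ T → RA s = RB s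
  mem : ∀ s, 0 ≤ RB s ∧ RB s ≤ 1

variable {S : Type} {A B : Arena S} {T : Set S} {bd : S → S} {pA pB : S → ℕ} {N : ℕ} {RA : S → ℝ}

/-- restriction of strategies -/
def restr (H : Unf A B T bd pA pB N RA) {pl : Player} (sg : Strategy A pl) : Strategy B pl :=
  ⟨sg.next, fun l s h1 h2 => by
    have hs : s ∉ T := fun h => h2 (H.tB s h)
    rw [← H.hE s hs]
    exact sg.valid l s (by rw [H.ho s hs]; exact h1) (by rw [H.hE s hs]; exact h2)⟩

/-- payoff of the stopped path -/
def gst (B : Arena S) (T : Set S) (pB : S → ℕ) (RB : S → ℝ) (u : PathSpace S) : ENNReal :=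
  pay B pB RB (stopK T u)

theorem gst_meas (RB : S → ℝ) : Measurable (gst B T pB RB) :=
  (pay_measurable B pB RB).comp (meas_stopK T)

theorem pay_shinv (A : Arena S) (pri : S → ℕ) (R : S → ℝ) (T : Set S) :
    ShInv T {s | A.E s = ∅} (pay A pri R) := by
  intro s _ u h
  rw [pay, pay, payoff_pcons A pri R s u h]

theorem gst_shinv (H : Unf A B T bd pA pB N RA) (RB : S → ℝ) :
    ShInv T {s | A.E s = ∅} (gst B T pB RB) := by
  intro s hs u h
  rw [gst, gst, stopK_pcons T s hs, pay, pay, payoff_pcons B pB RB s _]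
  rw [← H.hE s hs]
  exact h

theorem gst_hit (H : Unf A B T bd pA pB N RA) (RB : S → ℝ) (t : S) (ht : t ∈ T)
    (u : PathSpace S) : gst B T pB RB (pcons t u) = ENNReal.ofReal (RB t) := by
  have h0 := stopK_pcons_mem T t ht u 0
  rw [gst, pay, payoff_first B pB RB _ 0 (by rw [h0]; exact H.tB t ht) (by simp), h0]

theorem gst_nohit (H : Unf A B T bd pA pB N RA) (RB : S → ℝ) (hRB : RComp T RA RB)
    (u : PathSpace S) (hu : ∀ n, u n ∉ T) : gst B T pB RB u = pay A pA RA u := by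
  rw [gst, stopK_nohit T u hu, pay, pay]
  congr 1
  exact (payoff_congr A B pA pB RA RB u (fun n => H.hE _ (hu n)) (fun n => H.hpri _ (hu n))
    (fun n => hRB.off _ (hu n))).symm

theorem kap_agree (H : Unf A B T bd pA pB N RA) (σ1 : Strategy A Player.one)
    (σ2 : Strategy A Player.two) (τ1 : Strategy B Player.one) (τ2 : Strategy B Player.two)
    (h : List S) (s : S) (hs : s ∉ T)
    (h1 : A.owner s = Player.one → σ1.next h s = τ1.next h s)
    (h2 : A.owner s = Player.two → σ2.next h s = τ2.next h s) :
    kap A σ1 σ2 h s = kap B τ1 τ2 h s := by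
  simp only [kap, ← H.hE s hs, ← H.ho s hs]
  split_ifs
  · rfl
  · cases ho : A.owner s with
    | one => simp only [h1 ho]
    | two => simp only [h2 ho]
    | nature => simp only [natPMF, H.hprob]

theorem lint_gst (H : Unf A B T bd pA pB N RA) (RB : S → ℝ) (σ1 : Strategy A Player.one)
    (σ2 : Strategy A Player.two) (τ1 : Strategy B Player.one) (τ2 : Strategy B Player.two)
    (s0 : S)
    (h1 : ∀ h s, (∀ x ∈ h, x ∉ T) → s ∉ T → σ1.next h s = τ1.next h s)
    (h2 : ∀ h s, (∀ x ∈ h, x ∉ T) → s ∉ T → σ2.next h s = τ2.next h s) :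
    ∫⁻ u, gst B T pB RB u ∂(tm (Dg A σ1 σ2 s0)) = lexp B pB RB τ1 τ2 s0 := by
  rw [lexp, ← map_stopK T (Dg A σ1 σ2 s0) (Dg B τ1 τ2 s0)]
  · rw [lintegral_map (pay_measurable B pB RB) (meas_stopK T)]; rfl
  · intro h hh
    rcases List.eq_nil_or_concat' h with rfl | ⟨l, s, rfl⟩
    · rfl
    · have hl : ∀ x ∈ l, x ∉ T := fun x hx => hh x (by simp [hx])
      have hs : s ∉ T := hh s (by simp)
      rw [Dg_snoc, Dg_snoc]
      exact kap_agree H _ _ _ _ _ _ hs (fun _ => h1 l s hl hs) (fun _ => h2 l s hl hs)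
  · intro h t ht
    rw [Dg_snoc, kap, if_pos (H.tB t ht)]

theorem kap_T (H : Unf A B T bd pA pB N RA) (σ1 : Strategy A Player.one)
    (σ2 : Strategy A Player.two) (h : List S) (t : S) (ht : t ∈ T) :
    kap A σ1 σ2 h t = PMF.pure (bd t) := by
  have hne : A.E t ≠ ∅ := by rw [H.tE t ht]; simp
  have := σ2.valid h t (H.tO t ht) hne
  rw [H.tE t ht] at this
  simp only [kap, H.tO t ht, if_neg hne]
  rw [Set.mem_singleton_iff.1 this]

theorem hE_Dg (σ1 : Strategy A Player.one) (σ2 : Strategy A Player.two) (s0 : S) :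
    ∀ h : List S, ∀ s ∈ {s | A.E s = ∅}, Dg A σ1 σ2 s0 (h ++ [s]) = PMF.pure s := by
  intro h s hs
  rw [Dg_snoc, kap, if_pos (show A.E s = ∅ from hs)]

theorem Unf.tne (H : Unf A B T bd pA pB N RA) (t : S) (ht : t ∈ T) : A.E t ≠ ∅ := by
  rw [H.tE t ht]; simp

/-- the part of a history after the first visit of `T` -/
def aftF (T : Set S) : List S → Option (S × List S)
  | [] => none
  | x :: l => if x ∈ T then some (x, l) else aftF T l

theorem aftF_none (h : List S) (hh : ∀ x ∈ h, x ∉ T) : aftF T h = none := by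
  induction h with
  | nil => rfl
  | cons x l ih =>
    rw [aftF, if_neg (hh x (by simp)), ih fun y hy => hh y (by simp [hy])]

theorem aftF_some (h : List S) (hh : ∀ x ∈ h, x ∉ T) (t : S) (ht : t ∈ T) (l : List S) :
    aftF T (h ++ t :: l) = some (t, l) := by
  induction h with
  | nil => simp [aftF, ht]
  | cons x h ih =>
    rw [List.cons_append, aftF, if_neg (hh x (by simp)), ih fun y hy => hh y (by simp [hy])]

/-- Player 2 strategy: first `τ2`, then `θ` -/
def comb2 (H : Unf A B T bd pA pB N RA) (τ2 : Strategy B Player.two)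
    (θ : S → Strategy A Player.two) : Strategy A Player.two :=
  ⟨fun h s => match aftF T h with
    | none => if s ∈ T then bd s else τ2.next h s
    | some (t, l) => (θ t).next l s, fun h s h1 h2 => by
    cases hh : aftF T h with
    | none =>
      dsimp only
      split_ifs with hs
      · rw [H.tE s hs]; rfl
      · rw [H.hE s hs]
        exact τ2.valid h s (by rw [← H.ho s hs]; exact h1) (by rw [← H.hE s hs]; exact h2)
    | some q => exact (θ q.1).valid q.2 s h1 h2⟩

theorem upper_step (H : Unf A B T bd pA pB N RA) (RB : S → ℝ) (hRB : RComp T RA RB)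
    (hw : ∀ t ∈ T, RB t = upperValue A pA RA (bd t)) (s0 : S) :
    upperValue A pA RA s0 ≤ upperValue B pB RB s0 := by
  refine le_of_forall_pos_le_add fun ε hε => ?_
  obtain ⟨τ2, hτ⟩ := exists_opt2 B H.wB pB RB hRB.mem s0 (ε/2) (by linarith)
  choose θ hθ using fun t => exists_opt2 A H.wA pA RA H.hRA (bd t) (ε/2) (by linarith)
  have hub := (upper_mem B H.wB pB RB hRB.mem s0).1
  refine upper_le A H.wA pA RA H.hRA s0 _ (by linarith) (comb2 H τ2 θ) fun σ1 => ?_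
  have key : lexp A pA RA σ1 (comb2 H τ2 θ) s0 ≤
      ∫⁻ u, (gst B T pB RB u + ENNReal.ofReal (ε/2)) ∂(tm (Dg A σ1 (comb2 H τ2 θ) s0)) := by
    refine hit_all T {s | A.E s = ∅} _ _ (pay_measurable A pA RA) ((gst_meas RB).add_const _)
      (pay_shinv A pA RA T) ?_ _ (hE_Dg _ _ _) ?_ ?_
    · intro s hs u h
      dsimp only
      rw [gst_shinv H RB s hs u h]
    · intro h hh t ht
      rw [Dg_shift A σ1 (comb2 H τ2 θ) s0 h t (bd t) (kap_T H _ _ _ _ ht)]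
      have e1 : shiftS (h ++ [t]) (comb2 H τ2 θ) = θ t := by
        apply Strategy_ext
        intro l s
        simp only [shiftS, comb2, List.append_assoc, List.singleton_append,
          aftF_some h hh t ht]
      rw [e1]
      have e2 : ∀ u, pay A pA RA (pcons t u) = pay A pA RA u := fun u => by
        rw [pay, pay, payoff_pcons A pA RA t u (Or.inl (H.tne t ht))]
      simp only [e2, gst_hit H RB t ht, hw t ht]
      refine (hθ t _).trans ?_
      simp
    · intro u hu
      rw [gst_nohit H RB hRB u hu]
      exact le_self_add
  refine key.trans ?_
  rw [lintegral_add_right _ measurable_const]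
  rw [lint_gst H RB σ1 (comb2 H τ2 θ) (restr H σ1) τ2 s0 (fun _ _ _ _ => rfl)
    (fun h s hh hs => by simp only [comb2, aftF_none h hh, if_neg hs])]
  have : ENNReal.ofReal (upperValue B pB RB s0 + ε) = ENNReal.ofReal (upperValue B pB RB s0) +
      ENNReal.ofReal (ε/2) + ENNReal.ofReal (ε/2) := by
    rw [← ENNReal.ofReal_add hub (by linarith), ← ENNReal.ofReal_add (by linarith) (by linarith)]
    congr 1; ring
  rw [this]
  have h3 := hτ (restr H σ1)
  simp only [lintegral_const, measure_univ, mul_one]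
  gcongr

end Unfold

section LowerPart

open MeasureTheory

/-- drop the first `k` states -/
def pdrop {S : Type} (k : ℕ) (u : PathSpace S) : PathSpace S := fun n => u (k + n)

theorem meas_pdrop {S : Type} (k : ℕ) : Measurable (pdrop (S := S) k) :=
  meas_into _ fun n B => meas_coord (k + n) B

/-- at least `n` visits of `T` before termination -/
def visA {S : Type} (A : Arena S) (T : Set S) : ℕ → Set (PathSpace S)
  | 0 => Set.univ
  | n+1 => {u | ∃ i, u i ∈ T ∧ (∀ j ≤ i, A.E (u j) ≠ ∅) ∧ pdrop (i+1) u ∈ visA A T n}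

theorem meas_visA {S : Type} (A : Arena S) (T : Set S) (n : ℕ) : MeasurableSet (visA A T n) := by
  induction n with
  | zero => exact MeasurableSet.univ
  | succ n ih =>
    refine MeasurableSet.congr (s := ⋃ i, {u : PathSpace S | u i ∈ T} ∩
      ((⋂ j, ⋂ _ : j ≤ i, {u : PathSpace S | u j ∈ {s | A.E s ≠ ∅}}) ∩
        (pdrop (i+1)) ⁻¹' visA A T n)) ?_ ?_
    · exact MeasurableSet.iUnion fun i => (meas_coord i T).inter
        ((MeasurableSet.iInter fun j => MeasurableSet.iInter fun _ => meas_coord j _).inter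
          (meas_pdrop (i+1) ih))
    · ext u
      simp only [Set.mem_iUnion, Set.mem_inter_iff, Set.mem_iInter, Set.mem_preimage]
      exact Iff.rfl

theorem visA_anti {S : Type} (A : Arena S) (T : Set S) (n : ℕ) :
    visA A T (n+1) ⊆ visA A T n := by
  induction n with
  | zero => exact Set.subset_univ _
  | succ n ih =>
    rintro u ⟨i, h1, h2, h3⟩
    exact ⟨i, h1, h2, ih h3⟩

theorem pdrop_pcons {S : Type} (k : ℕ) (s : S) (u : PathSpace S) :
    pdrop (k+1) (pcons s u) = pdrop k u := by
  funext n
  show pcons s u (k + 1 + n) = u (k + n)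
  rw [show k + 1 + n = (k + n) + 1 by omega]; rfl

theorem visA_pcons {S : Type} (A : Arena S) (T : Set S) (n : ℕ) (s : S) (hs : s ∉ T)
    (u : PathSpace S) (h : A.E s ≠ ∅ ∨ u 0 = s) :
    pcons s u ∈ visA A T (n+1) ↔ u ∈ visA A T (n+1) := by
  by_cases hE : A.E s = ∅
  · have h0 := h.resolve_left (by simpa using hE)
    constructor
    · rintro ⟨i, _, h2, _⟩
      exact absurd hE (h2 0 (by omega))
    · rintro ⟨i, _, h2, _⟩
      exact absurd hE (by rw [← h0]; exact h2 0 (by omega))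
  · constructor
    · rintro ⟨i, h1, h2, h3⟩
      cases i with
      | zero => exact absurd h1 hs
      | succ i =>
        rw [pdrop_pcons] at h3
        exact ⟨i, h1, fun j hj => h2 (j+1) (by omega), h3⟩
    · rintro ⟨i, h1, h2, h3⟩
      refine ⟨i+1, h1, fun j hj => ?_, by rw [pdrop_pcons]; exact h3⟩
      cases j with
      | zero => exact hE
      | succ j => exact h2 j (by omega)

theorem visA_T {S : Type} (A : Arena S) (T : Set S) (n : ℕ) (t : S) (ht : t ∈ T)
    (hE : A.E t ≠ ∅) (u : PathSpace S) (h : u ∈ visA A T n) : pcons t u ∈ visA A T (n+1) := by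
  refine ⟨0, ht, fun j hj => ?_, ?_⟩
  · obtain rfl : j = 0 := by omega
    exact hE
  · rw [pdrop_pcons]
    have : pdrop 0 u = u := by funext n; simp [pdrop]
    rwa [this]

theorem visA_far {S : Type} (A : Arena S) (T : Set S) (n : ℕ) (u : PathSpace S)
    (h : u ∈ visA A T (n+1)) : ∃ i ≥ n, u i ∈ T ∧ ∀ j ≤ i, A.E (u j) ≠ ∅ := by
  induction n generalizing u with
  | zero =>
    obtain ⟨i, h1, h2, _⟩ := h
    exact ⟨i, by omega, h1, h2⟩
  | succ n ih =>
    obtain ⟨i, h1, h2, h3⟩ := h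
    obtain ⟨k, hk, h4, h5⟩ := ih _ h3
    refine ⟨i + 1 + k, by omega, h4, fun j hj => ?_⟩
    by_cases hji : j ≤ i
    · exact h2 j hji
    · have := h5 (j - (i+1)) (by omega)
      rw [pdrop, show i + 1 + (j - (i+1)) = j by omega] at this
      exact this

variable {S : Type} {A B : Arena S} {T : Set S} {bd : S → S} {pA pB : S → ℕ} {N : ℕ} {RA : S → ℝ}

theorem pay_le_one (A : Arena S) (pri : S → ℕ) (R : S → ℝ)
    (hR : ∀ s, 0 ≤ R s ∧ R s ≤ 1) (u : PathSpace S) : pay A pri R u ≤ 1 := by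
  rw [pay]; simpa using (payoff_mem A pri R hR u).2

theorem pay_all (H : Unf A B T bd pA pB N RA) (u : PathSpace S) (h : ∀ n, u ∈ visA A T n) :
    pay A pA RA u = 1 := by
  have hne : ∀ i, A.E (u i) ≠ ∅ := fun i => by
    obtain ⟨k, hk, _, h2⟩ := visA_far A T i u (h _)
    exact h2 i hk
  have hs : sSup {n | {i | pA (u i) = n}.Infinite} = N := by
    apply IsGreatest.csSup_eq
    constructor
    · show {i | pA (u i) = N}.Infinite
      rw [← Nat.frequently_atTop_iff_infinite, Filter.frequently_atTop]
      intro a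
      obtain ⟨k, hk, h1, _⟩ := visA_far A T a u (h _)
      exact ⟨k, hk, H.tN _ h1⟩
    · intro n hn
      obtain ⟨i, hi⟩ := Set.Infinite.nonempty hn
      rw [← show pA (u i) = n from hi]
      exact H.leN _
  rw [pay, payoff_inf A pA RA u hne, hs, if_pos H.evN, ENNReal.ofReal_one]

/-- approximating payoff -/
def Vn (A : Arena S) (T : Set S) (pA : S → ℕ) (RA : S → ℝ) (n : ℕ) (u : PathSpace S) : ENNReal :=
  max (pay A pA RA u) ((visA A T n).indicator (fun _ => 1) u)

theorem Vn_meas (n : ℕ) : Measurable (Vn A T pA RA n) :=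
  (pay_measurable A pA RA).max (measurable_const.indicator (meas_visA A T n))

theorem Vn_anti : Antitone (Vn A T pA RA) := by
  refine antitone_nat_of_succ_le fun n u => ?_
  exact max_le_max le_rfl (Set.indicator_le_indicator_of_subset (visA_anti A T n)
    (fun _ => zero_le) u)

theorem Vn_shinv (n : ℕ) : ShInv T {s | A.E s = ∅} (Vn A T pA RA (n+1)) := by
  intro s hs u h
  rw [Vn, Vn, pay_shinv A pA RA T s hs u h]
  simp only [Set.indicator, visA_pcons A T n s hs u h]

theorem Vn_T (H : Unf A B T bd pA pB N RA) (n : ℕ) (t : S) (ht : t ∈ T) (u : PathSpace S) :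
    Vn A T pA RA n u ≤ Vn A T pA RA (n+1) (pcons t u) := by
  refine max_le_max ?_ ?_
  · rw [pay, pay, payoff_pcons A pA RA t u (Or.inl (H.tne t ht))]
  · by_cases hu : u ∈ visA A T n
    · rw [Set.indicator_of_mem hu, Set.indicator_of_mem (visA_T A T n t ht (H.tne t ht) u hu)]
    · rw [Set.indicator_of_notMem hu]; exact zero_le

theorem Vn_inf (H : Unf A B T bd pA pB N RA) (u : PathSpace S) :
    ⨅ n, Vn A T pA RA n u ≤ pay A pA RA u := by
  by_cases h : ∀ n, u ∈ visA A T n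
  · refine (iInf_le _ 0).trans ?_
    rw [pay_all H u h]
    refine max_le (pay_le_one A pA RA H.hRA u) ?_
    rw [Set.indicator_of_mem (h 0)]
  · push Not at h
    obtain ⟨n, hn⟩ := h
    refine (iInf_le _ n).trans ?_
    rw [Vn, Set.indicator_of_notMem hn]
    simp

/-- bookkeeping step -/
def trk (T : Set S) (st : ℕ × S × List S) (x : S) : ℕ × S × List S :=
  if x ∈ T then (st.1 + 1, x, []) else (st.1, st.2.1, st.2.2 ++ [x])

theorem trk_free (k : ℕ) (t : S) (acc h : List S) (hh : ∀ x ∈ h, x ∉ T) :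
    h.foldl (trk T) (k, t, acc) = (k, t, acc ++ h) := by
  induction h generalizing acc with
  | nil => simp
  | cons x h ih =>
    rw [List.foldl_cons, trk, if_neg (hh x (by simp)), ih _ fun y hy => hh y (by simp [hy])]
    simp

theorem trk_hit (k : ℕ) (t : S) (h : List S) (hh : ∀ x ∈ h, x ∉ T) (t' : S) (ht : t' ∈ T) :
    (h ++ [t']).foldl (trk T) (k, t, []) = (k+1, t', []) := by
  rw [List.foldl_append, trk_free k t [] h hh]
  simp [trk, ht]

/-- iterated Player 1 strategy -/
def SigA (H : Unf A B T bd pA pB N RA) (τ : ℕ → S → Strategy B Player.one) (k : ℕ) (t : S) :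
    Strategy A Player.one :=
  ⟨fun h s => (τ (h.foldl (trk T) (k, t, [])).1 (h.foldl (trk T) (k, t, [])).2.1).next
    (h.foldl (trk T) (k, t, [])).2.2 s, fun h s h1 h2 => by
    have hs : s ∉ T := fun hs => by
      have := H.tO s hs
      rw [h1] at this
      cases this
    rw [H.hE s hs]
    exact Strategy.valid _ _ s (by rw [← H.ho s hs]; exact h1) (by rw [← H.hE s hs]; exact h2)⟩

theorem SigA_shift (H : Unf A B T bd pA pB N RA) (τ : ℕ → S → Strategy B Player.one) (k : ℕ)
    (t : S) (h : List S) (hh : ∀ x ∈ h, x ∉ T) (t' : S) (ht : t' ∈ T) :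
    shiftS (h ++ [t']) (SigA H τ k t) = SigA H τ (k+1) t' := by
  apply Strategy_ext
  intro l s
  simp only [shiftS, SigA]
  rw [List.foldl_append (l := h ++ [t']), trk_hit k t h hh t' ht]

theorem SigA_free (H : Unf A B T bd pA pB N RA) (τ : ℕ → S → Strategy B Player.one) (k : ℕ)
    (t : S) (h : List S) (hh : ∀ x ∈ h, x ∉ T) (s : S) :
    (SigA H τ k t).next h s = (τ k t).next h s := by
  simp only [SigA]
  rw [trk_free k t [] h hh]
  rfl

theorem lower_ind (H : Unf A B T bd pA pB N RA) (RB : S → ℝ) (hRB : RComp T RA RB)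
    (τ : ℕ → S → Strategy B Player.one) (η : ℕ → ENNReal) (hη : ∀ k, η k = η (k+1) + η (k+1))
    (hτ : ∀ k, ∀ t ∈ T, ∀ σ2 : Strategy B Player.two,
      ENNReal.ofReal (RB t) ≤ lexp B pB RB (τ k t) σ2 (bd t) + η (k+1)) (n : ℕ) :
    ∀ (k : ℕ), ∀ t ∈ T, ∀ σ2 : Strategy A Player.two,
      ENNReal.ofReal (RB t) ≤
        ∫⁻ u, Vn A T pA RA n u ∂(tm (Dg A (SigA H τ k t) σ2 (bd t))) + η k := by
  induction n with
  | zero =>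
    intro k t ht σ2
    refine le_trans (b := 1) (by simpa using (hRB.mem t).2) ?_
    refine le_trans ?_ le_self_add
    calc (1 : ENNReal) = ∫⁻ _u, 1 ∂(tm (Dg A (SigA H τ k t) σ2 (bd t))) := by simp
      _ ≤ _ := lintegral_mono fun u => by
        rw [Vn, Set.indicator_of_mem (show u ∈ visA A T 0 from Set.mem_univ u)]
        exact le_max_right _ _
  | succ n ih =>
    intro k t ht σ2
    have key : ∫⁻ u, gst B T pB RB u ∂(tm (Dg A (SigA H τ k t) σ2 (bd t))) ≤
        ∫⁻ u, (Vn A T pA RA (n+1) u + η (k+1)) ∂(tm (Dg A (SigA H τ k t) σ2 (bd t))) := by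
      refine hit_all T {s | A.E s = ∅} _ _ (gst_meas RB) ((Vn_meas (n+1)).add_const _)
        (gst_shinv H RB) ?_ _ (hE_Dg _ _ _) ?_ ?_
      · intro s hs u h
        dsimp only
        rw [Vn_shinv n s hs u h]
      · intro h hh t' ht'
        rw [Dg_shift A (SigA H τ k t) σ2 (bd t) h t' (bd t') (kap_T H _ _ _ _ ht'),
          SigA_shift H τ k t h hh t' ht']
        simp only [gst_hit H RB t' ht', lintegral_const, measure_univ, mul_one]
        refine (ih (k+1) t' ht' (shiftS (h ++ [t']) σ2)).trans ?_
        rw [lintegral_add_right _ measurable_const]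
        simp only [lintegral_const, measure_univ, mul_one]
        gcongr with u
        exact Vn_T H n t' ht' u
      · intro u hu
        rw [gst_nohit H RB hRB u hu]
        exact (le_max_left _ _).trans le_self_add
    rw [lint_gst H RB (SigA H τ k t) σ2 (τ k t) (restr H σ2) (bd t)
      (fun h s hh _ => SigA_free H τ k t h hh s) (fun _ _ _ _ => rfl),
      lintegral_add_right _ measurable_const] at key
    simp only [lintegral_const, measure_univ, mul_one] at key
    refine (hτ k t ht (restr H σ2)).trans ?_
    rw [hη k, ← add_assoc]
    gcongr

theorem lower_step (H : Unf A B T bd pA pB N RA) (RB : S → ℝ) (hRB : RComp T RA RB)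
    (hw : ∀ t ∈ T, RB t ≤ lowerValue B pB RB (bd t)) (t : S) (ht : t ∈ T) :
    RB t ≤ lowerValue A pA RA (bd t) := by
  refine le_of_forall_pos_le_add fun ε hε => ?_
  have hpos : ∀ k : ℕ, 0 < ε / 2 ^ k := fun k => by positivity
  choose τ hτ using fun (k : ℕ) t =>
    exists_opt1 B H.wB pB RB hRB.mem (bd t) (ε / 2 ^ (k+1)) (hpos _)
  refine le_lower A H.wA pA RA H.hRA (bd t) _ ε hε.le (SigA H τ 0 t) fun σ2 => ?_
  have hi := fun n => lower_ind H RB hRB τ (fun k => ENNReal.ofReal (ε / 2 ^ k))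
    (fun k => by
      rw [← ENNReal.ofReal_add (hpos _).le (hpos _).le]
      congr 1; rw [pow_succ]; field_simp; ring)
    (fun k t ht σ2 => (ENNReal.ofReal_le_ofReal (hw t ht)).trans (hτ k t σ2)) n 0 t ht σ2
  simp only [pow_zero, div_one] at hi
  have h1 : ∫⁻ u, ⨅ n, Vn A T pA RA n u ∂(tm (Dg A (SigA H τ 0 t) σ2 (bd t))) =
      ⨅ n, ∫⁻ u, Vn A T pA RA n u ∂(tm (Dg A (SigA H τ 0 t) σ2 (bd t))) := by
    refine lintegral_iInf (fun n => Vn_meas n) Vn_anti ?_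
    refine ne_top_of_le_ne_top ENNReal.one_ne_top ?_
    calc _ ≤ ∫⁻ _u, 1 ∂(tm (Dg A (SigA H τ 0 t) σ2 (bd t))) := lintegral_mono fun u => by
          refine max_le (pay_le_one A pA RA H.hRA u) ?_
          rw [Set.indicator_of_mem (show u ∈ visA A T 0 from Set.mem_univ u)]
      _ = 1 := by simp
  have h2 : (⨅ n, ∫⁻ u, Vn A T pA RA n u ∂(tm (Dg A (SigA H τ 0 t) σ2 (bd t)))) ≤
      lexp A pA RA (SigA H τ 0 t) σ2 (bd t) := by
    rw [← h1]
    exact lintegral_mono fun u => Vn_inf H u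
  refine le_trans ?_ (add_le_add_left h2 _)
  rw [ENNReal.iInf_add]
  exact le_iInf hi

end LowerPart

section Start

open MeasureTheory

/-- forget the first state of the history -/
def tailS {S : Type} {A : Arena S} {pl : Player} (sg : Strategy A pl) :
    Strategy A pl := ⟨fun l s => sg.next l.tail s, fun l s => sg.valid l.tail s⟩

theorem shift_tail {S : Type} {A : Arena S} {pl : Player} (sg : Strategy A pl) (x : S) :
    shiftS ([] ++ [x]) (tailS sg) = sg := Strategy_ext fun _ _ => rfl

theorem lexp_start {S : Type} (A : Arena S) (pri : S → ℕ) (R : S → ℝ)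
    (σ1 : Strategy A Player.one) (σ2 : Strategy A Player.two) (s0 s1 : S)
    (hE : A.E s0 = {s1}) (ho : A.owner s0 = Player.two) :
    lexp A pri R σ1 σ2 s0 =
      lexp A pri R (shiftS ([] ++ [s0]) σ1) (shiftS ([] ++ [s0]) σ2) s1 := by
  have hne : A.E s0 ≠ ∅ := by rw [hE]; simp
  have hk : kap A σ1 σ2 [] s0 = PMF.pure s1 := by
    have := σ2.valid [] s0 ho hne
    rw [hE] at this
    simp only [kap, ho, if_neg hne]
    rw [Set.mem_singleton_iff.1 this]
  rw [lexp, lexp, lint_pure _ s0 (Dg_nil _ _ _ _) _ (pay_measurable A pri R),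
    ← Dg_shift A σ1 σ2 s0 [] s0 s1 hk]
  refine lintegral_congr fun u => ?_
  rw [pay, pay, payoff_pcons A pri R s0 u (Or.inl hne)]

theorem start_lower {S : Type} (A : Arena S) (hA : A.Wellformed) (pri : S → ℕ) (R : S → ℝ)
    (hR : ∀ s, 0 ≤ R s ∧ R s ≤ 1) (s0 s1 : S)
    (hE : A.E s0 = {s1}) (ho : A.owner s0 = Player.two) :
    lowerValue A pri R s1 ≤ lowerValue A pri R s0 := by
  refine le_of_forall_pos_le_add fun ε hε => ?_
  obtain ⟨σ1, h⟩ := exists_opt1 A hA pri R hR s1 ε hε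
  refine le_lower A hA pri R hR s0 _ ε hε.le (tailS σ1) fun σ2 => ?_
  rw [lexp_start A pri R _ _ s0 s1 hE ho, shift_tail]
  exact h _

theorem start_upper {S : Type} (A : Arena S) (hA : A.Wellformed) (pri : S → ℕ) (R : S → ℝ)
    (hR : ∀ s, 0 ≤ R s ∧ R s ≤ 1) (s0 s1 : S)
    (hE : A.E s0 = {s1}) (ho : A.owner s0 = Player.two) :
    upperValue A pri R s0 ≤ upperValue A pri R s1 := by
  refine le_of_forall_pos_le_add fun ε hε => ?_
  obtain ⟨σ2, h⟩ := exists_opt2 A hA pri R hR s1 ε hε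
  have h0 := (upper_mem A hA pri R hR s1).1
  refine upper_le A hA pri R hR s0 _ (by linarith) (tailS σ2) fun σ1 => ?_
  rw [lexp_start A pri R _ _ s0 s1 hE ho, shift_tail, ENNReal.ofReal_add h0 hε.le]
  exact h _

end Start

section GameFacts

theorem game_wf {L P : Type} (M : PLTS L P) (F : pLmu L) : (gameArena M F).Wellformed := by
  rintro ⟨(p | d), G⟩ h
  · exfalso
    cases G with
    | var Y =>
      simp only [gameArena] at h
      split at h <;> cases h
    | _ => simp [gameArena] at h
  · have hinj : Function.Injective (fun q : P => ((Sum.inl q : P ⊕ PDist P), G)) := by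
      intro a b hab; simpa using hab
    have hp : ∀ q, (gameArena M F).prob (Sum.inr d, G) (Sum.inl q, G) = d.f q := by
      intro q; simp [gameArena]
    have hz : ∀ t, t ∉ Set.range (fun q : P => ((Sum.inl q : P ⊕ PDist P), G)) →
        (gameArena M F).prob (Sum.inr d, G) t = 0 := by
      rintro ⟨(q | e), G'⟩ ht
      · by_cases hG : G' = G
        · exact absurd ⟨q, by rw [hG]⟩ ht
        · simp [gameArena, hG]
      · simp [gameArena]
    refine ⟨?_, ?_, ?_⟩
    · intro t
      by_cases ht : t ∈ Set.range (fun q : P => ((Sum.inl q : P ⊕ PDist P), G))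
      · obtain ⟨q, rfl⟩ := ht
        dsimp only
        rw [hp]; exact d.nonneg q
      · rw [hz t ht]
    · rw [← hinj.hasSum_iff hz]
      convert d.sum_one using 1
      funext q
      exact hp q
    · ext t
      constructor
      · rintro ⟨q, hq, rfl⟩
        rw [Function.mem_support]
        dsimp only
        rw [hp]; exact hq
      · intro ht
        by_cases hr : t ∈ Set.range (fun q : P => ((Sum.inl q : P ⊕ PDist P), G))
        · obtain ⟨q, rfl⟩ := hr
          rw [Function.mem_support] at ht
          dsimp only at ht
          rw [hp] at ht
          exact ⟨q, ht, rfl⟩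
        · exact absurd (hz t hr) ht

theorem gameR_mem {L P : Type} (F : pLmu L) (ρ : ℕ → P → unitInterval) (s : GState L P) :
    0 ≤ gameR F ρ s ∧ gameR F ρ s ≤ 1 := by
  obtain ⟨(p | d), G⟩ := s
  · cases G <;> simp [gameR]
    exact ⟨(ρ _ p).2.1, (ρ _ p).2.2⟩
  · simp [gameR]

theorem varInfo_shift {L : Type} (G : pLmu L) (d Y : ℕ) :
    G.varInfo (d+1) Y = (G.varInfo d Y).map (fun r => (r.1 + 1, r.2)) := by
  induction G generalizing d with
  | var _ => rfl
  | dia _ G ih => simp only [pLmu.varInfo]; exact ih _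
  | box _ G ih => simp only [pLmu.varInfo]; exact ih _
  | or G K ihG ihK =>
    simp only [pLmu.varInfo]; rw [ihG (d+1), ihK (d+1)]
    cases G.varInfo (d+1) Y <;> rfl
  | and G K ihG ihK =>
    simp only [pLmu.varInfo]; rw [ihG (d+1), ihK (d+1)]
    cases G.varInfo (d+1) Y <;> rfl
  | mu Z G ih => simp only [pLmu.varInfo]; split_ifs <;> [rfl; exact ih _]
  | nu Z G ih => simp only [pLmu.varInfo]; split_ifs <;> [rfl; exact ih _]

theorem bodyOf_none {L : Type} (G : pLmu L) (Y : ℕ) (h : Y ∉ G.binders) :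
    G.bodyOf Y = none := by
  induction G with
  | var _ => rfl
  | dia _ G ih => exact ih h
  | box _ G ih => exact ih h
  | or G K ihG ihK =>
    simp only [pLmu.binders, List.mem_append, not_or] at h
    simp [pLmu.bodyOf, ihG h.1, ihK h.2]
  | and G K ihG ihK =>
    simp only [pLmu.binders, List.mem_append, not_or] at h
    simp [pLmu.bodyOf, ihG h.1, ihK h.2]
  | mu Z G ih =>
    simp only [pLmu.binders, List.mem_cons, not_or] at h
    simp [pLmu.bodyOf, ih h.2, Ne.symm h.1]
  | nu Z G ih =>
    simp only [pLmu.binders, List.mem_cons, not_or] at h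
    simp [pLmu.bodyOf, ih h.2, Ne.symm h.1]

/-- the states at the variable `X` -/
def TX (L P : Type) (X : ℕ) : Set (GState L P) := {s | ∃ q : P, s = (Sum.inl q, pLmu.var X)}

theorem varInfo_F {L : Type} (G : pLmu L) (X Y : ℕ) (h : X ≠ Y) :
    (pLmu.nu X G).varInfo 0 Y = (G.varInfo 0 Y).map (fun r => (r.1 + 1, r.2)) := by
  rw [← varInfo_shift]
  simp [pLmu.varInfo, h]

theorem game_unf {L P : Type} (M : PLTS L P) (G : pLmu L) (X : ℕ)
    (hF : (pLmu.nu X G).NormalForm) (ρ : ℕ → P → unitInterval) :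
    Unf (gameArena M (pLmu.nu X G)) (gameArena M G) (TX L P X) (fun s => (s.1, G))
      (gamePri (pLmu.nu X G)) (gamePri G) (2 * (pLmu.nu X G).size) (gameR (pLmu.nu X G) ρ) where
  wA := game_wf _ _
  wB := game_wf _ _
  hE := by
    rintro ⟨(p | d), K⟩ hs
    · cases K with
      | var Y =>
        have hY : X ≠ Y := fun h => hs ⟨p, by rw [h]⟩
        simp [gameArena, pLmu.bodyOf, hY]
      | _ => rfl
    · cases K <;> rfl
  ho := by
    rintro ⟨(p | d), K⟩ hs
    · cases K with
      | var Y =>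
        have hY : X ≠ Y := fun h => hs ⟨p, by rw [h]⟩
        simp only [gameArena, varInfo_F G X Y hY]
        rcases G.varInfo 0 Y with _ | ⟨d, _ | _⟩ <;> rfl
      | _ => rfl
    · cases K <;> rfl
  hprob := rfl
  hpri := by
    rintro ⟨(p | d), K⟩ hs
    · cases K with
      | var Y =>
        have hY : X ≠ Y := fun h => hs ⟨p, by rw [h]⟩
        simp only [gamePri, varInfo_F G X Y hY]
        rcases G.varInfo 0 Y with _ | ⟨d, _ | _⟩
        · rfl
        · simp [pLmu.size]
        · simp [pLmu.size]
      | _ => rfl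
    · cases K <;> rfl
  hRA := gameR_mem _ _
  tE := by
    rintro _ ⟨q, rfl⟩
    simp [gameArena, pLmu.bodyOf]
  tO := by
    rintro _ ⟨q, rfl⟩
    simp [gameArena, pLmu.varInfo]
  tB := by
    rintro _ ⟨q, rfl⟩
    have : X ∉ G.binders := (List.nodup_cons.1 hF.1).1
    simp [gameArena, bodyOf_none G X this]
  tN := by
    rintro _ ⟨q, rfl⟩
    simp [gamePri, pLmu.varInfo]
  leN := by
    rintro ⟨(p | d), K⟩
    · cases K with
      | var Y =>
        by_cases hY : X = Y
        · subst hY; simp [gamePri, pLmu.varInfo]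
        · simp only [gamePri, varInfo_F G X Y hY]
          rcases G.varInfo 0 Y with _ | ⟨d, _ | _⟩
          · simp
          · simp
          · simp [pLmu.size]
      | _ => exact Nat.zero_le _
    · cases K <;> exact Nat.zero_le _
  evN := even_two_mul _

theorem game_rcomp {L P : Type} (G : pLmu L) (X : ℕ) (ρ : ℕ → P → unitInterval)
    (w : P → unitInterval) :
    RComp (TX L P X) (gameR (pLmu.nu X G) ρ) (gameR G (Function.update ρ X w)) where
  off := by
    rintro ⟨(p | d), K⟩ hs
    · cases K with
      | var Y =>
        have hY : Y ≠ X := fun h => hs ⟨p, by rw [h]⟩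
        simp [gameR, hY]
      | _ => rfl
    · cases K <;> rfl
  mem := gameR_mem _ _

theorem gameR_T {L P : Type} (G : pLmu L) (X : ℕ) (ρ : ℕ → P → unitInterval)
    (w : P → unitInterval) (q : P) :
    gameR G (Function.update ρ X w) (Sum.inl q, pLmu.var X) = w q := by
  simp [gameR]

end GameFacts

section Semantics

theorem distExp_mono {P : Type} (d : PDist P) {g h : P → unitInterval} (hgh : g ≤ h) :
    pLmu.distExp d g ≤ pLmu.distExp d h := by
  have hs : ∀ g : P → unitInterval, Summable (fun q => d.f q * (g q : ℝ)) := fun g =>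
    Summable.of_nonneg_of_le (fun q => mul_nonneg (d.nonneg q) (g q).2.1)
      (fun q => mul_le_of_le_one_right (d.nonneg q) (g q).2.2) d.sum_one.summable
  refine Set.monotone_projIcc _ (Summable.tsum_le_tsum (fun q => ?_) (hs g) (hs h))
  exact mul_le_mul_of_nonneg_left (hgh q) (d.nonneg q)

theorem sem_mono {L P : Type} (M : PLTS L P) (G : pLmu L) {ρ ρ' : ℕ → P → unitInterval}
    (h : ρ ≤ ρ') : pLmu.sem M G ρ ≤ pLmu.sem M G ρ' := by
  have hu : ∀ {ρ ρ' : ℕ → P → unitInterval}, ρ ≤ ρ' → ∀ X g,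
      Function.update ρ X g ≤ Function.update ρ' X g := by
    intro ρ ρ' h X g Y
    by_cases hY : Y = X
    · subst hY; simp
    · simpa [hY] using h Y
  induction G generalizing ρ ρ' with
  | var Y => intro p; exact h Y p
  | dia a G ih =>
    intro p
    refine sSup_le ?_
    rintro _ ⟨d, hd, rfl⟩
    exact (distExp_mono d (ih h)).trans (le_sSup ⟨d, hd, rfl⟩)
  | box a G ih =>
    intro p
    refine le_sInf ?_
    rintro _ ⟨d, hd, rfl⟩
    exact (sInf_le (Set.mem_image_of_mem _ hd)).trans (distExp_mono d (ih h))
  | or G K ihG ihK => intro p; exact sup_le_sup (ihG h p) (ihK h p)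
  | and G K ihG ihK => intro p; exact inf_le_inf (ihG h p) (ihK h p)
  | mu X G ih =>
    have : sInf {g : P → unitInterval | pLmu.sem M G (Function.update ρ X g) ≤ g} ≤
        sInf {g : P → unitInterval | pLmu.sem M G (Function.update ρ' X g) ≤ g} :=
      sInf_le_sInf fun g hg => (ih (hu h X g)).trans hg
    exact this
  | nu X G ih =>
    have : sSup {g : P → unitInterval | g ≤ pLmu.sem M G (Function.update ρ X g)} ≤
        sSup {g : P → unitInterval | g ≤ pLmu.sem M G (Function.update ρ' X g)} :=
      sSup_le_sSup fun g hg => le_trans hg (ih (hu h X g))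
    exact this

theorem sem_nu_post {L P : Type} (M : PLTS L P) (G : pLmu L) (X : ℕ)
    (ρ : ℕ → P → unitInterval) : pLmu.sem M (pLmu.nu X G) ρ ≤
      pLmu.sem M G (Function.update ρ X (pLmu.sem M (pLmu.nu X G) ρ)) := by
  have : pLmu.sem M (pLmu.nu X G) ρ =
      sSup {g : P → unitInterval | g ≤ pLmu.sem M G (Function.update ρ X g)} := rfl
  rw [this]
  refine sSup_le fun g hg => le_trans hg (sem_mono M G ?_)
  intro Y
  by_cases hY : Y = X
  · subst hY
    rw [Function.update_self, Function.update_self]; exact le_sSup hg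
  · simp [hY]

theorem le_sem_nu {L P : Type} (M : PLTS L P) (G : pLmu L) (X : ℕ)
    (ρ : ℕ → P → unitInterval) (g : P → unitInterval)
    (hg : g ≤ pLmu.sem M G (Function.update ρ X g)) : g ≤ pLmu.sem M (pLmu.nu X G) ρ :=
  le_sSup (a := g) (s := {g : P → unitInterval | g ≤ pLmu.sem M G (Function.update ρ X g)}) hg

end Semantics

/-- **Inductive step for the greatest fixed point case** of the equivalence of the
denotational and game semantics of pLμ: assuming the equivalence for the body `G₁`
(under every interpretation), the equivalence holds for `νX.G₁`. -/
theorem nu_case_of_main_theorem {L P : Type} [Countable L]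
    (M : PLTS L P) (G₁ : pLmu L) (X : ℕ) (hF : (pLmu.nu X G₁).NormalForm)
    (IH : ∀ (ρ' : ℕ → P → unitInterval) (q : P),
      (pLmu.sem M G₁ ρ' q : ℝ) =
          lowerValue (gameArena M G₁) (gamePri G₁) (gameR G₁ ρ') (Sum.inl q, G₁) ∧
        lowerValue (gameArena M G₁) (gamePri G₁) (gameR G₁ ρ') (Sum.inl q, G₁) =
          upperValue (gameArena M G₁) (gamePri G₁) (gameR G₁ ρ') (Sum.inl q, G₁))
    (ρ : ℕ → P → unitInterval) (p : P) :
    (pLmu.sem M (pLmu.nu X G₁) ρ p : ℝ) =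
        lowerValue (gameArena M (pLmu.nu X G₁)) (gamePri (pLmu.nu X G₁))
          (gameR (pLmu.nu X G₁) ρ) (Sum.inl p, pLmu.nu X G₁) ∧
      lowerValue (gameArena M (pLmu.nu X G₁)) (gamePri (pLmu.nu X G₁))
          (gameR (pLmu.nu X G₁) ρ) (Sum.inl p, pLmu.nu X G₁) =
        upperValue (gameArena M (pLmu.nu X G₁)) (gamePri (pLmu.nu X G₁))
          (gameR (pLmu.nu X G₁) ρ) (Sum.inl p, pLmu.nu X G₁) := by
  have H := game_unf M G₁ X hF ρ
  have hsE : (gameArena M (pLmu.nu X G₁)).E (Sum.inl p, pLmu.nu X G₁) = {(Sum.inl p, G₁)} := rfl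
  have hsO : (gameArena M (pLmu.nu X G₁)).owner (Sum.inl p, pLmu.nu X G₁) = Player.two := rfl
  have hlow : (pLmu.sem M (pLmu.nu X G₁) ρ p : ℝ) ≤
      lowerValue (gameArena M (pLmu.nu X G₁)) (gamePri (pLmu.nu X G₁))
          (gameR (pLmu.nu X G₁) ρ) (Sum.inl p, pLmu.nu X G₁) := by
    refine le_trans ?_ (start_lower _ H.wA _ _ H.hRA _ _ hsE hsO)
    have := lower_step H _ (game_rcomp G₁ X ρ (pLmu.sem M (pLmu.nu X G₁) ρ)) (by
      rintro _ ⟨q, rfl⟩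
      rw [gameR_T, ← (IH _ q).1]
      exact sem_nu_post M G₁ X ρ q) (Sum.inl p, pLmu.var X) ⟨p, rfl⟩
    rwa [gameR_T] at this
  have hup : upperValue (gameArena M (pLmu.nu X G₁)) (gamePri (pLmu.nu X G₁))
          (gameR (pLmu.nu X G₁) ρ) (Sum.inl p, pLmu.nu X G₁) ≤
      (pLmu.sem M (pLmu.nu X G₁) ρ p : ℝ) := by
    refine (start_upper _ H.wA _ _ H.hRA _ _ hsE hsO).trans ?_
    let w : P → unitInterval := fun q =>
      ⟨upperValue (gameArena M (pLmu.nu X G₁)) (gamePri (pLmu.nu X G₁))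
          (gameR (pLmu.nu X G₁) ρ) (Sum.inl q, G₁), upper_mem _ H.wA _ _ H.hRA _⟩
    have hw : w ≤ pLmu.sem M (pLmu.nu X G₁) ρ := by
      refine le_sem_nu M G₁ X ρ w fun q => ?_
      have := upper_step H _ (game_rcomp G₁ X ρ w) (by
        rintro _ ⟨q, rfl⟩
        rw [gameR_T]) (Sum.inl q, G₁)
      rw [← (IH _ q).2, ← (IH _ q).1] at this
      exact this
    exact hw p
  have hlu := lower_le_upper _ H.wA (gamePri (pLmu.nu X G₁)) _ H.hRA (Sum.inl p, pLmu.nu X G₁)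
  exact ⟨le_antisymm hlow (hlu.trans hup), le_antisymm hlu (hup.trans hlow)⟩
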